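/- arXiv:2105.09565 — 5 statements merged into one kernel-verified Lean document; each statement's English description precedes it below -/
import Mathlib

section
/- (Hypercontractive inequality, Rademacher case.) Let f be a Rademacher random multiplicative function, let (a_n)_{n ≥ 1} be a finitely supported sequence of complex numbers, and let m ≥ 1 be an integer. Then E[|∑_{n ≥ 1} a_n f(n)|^{2m}] ≤ (∑_{n ≥ 1} |a_n|² d_{2m−1}(n))^m. -/
open MeasureTheory ProbabilityTheory

noncomputable section

/-- The `k`-fold divisor function: the number of ways of writing `n` as an ordered
product of `k` positive integers. -/
def dFold (k n : ℕ) : ℕ := Nat.card {v : Fin k → ℕ // ∏ i, v i = n}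

/-- A Rademacher random multiplicative function. -/
structure IsRademacherRMF {Ω : Type*} [MeasurableSpace Ω] (μ : Measure Ω)
    (f : Ω → ℕ → ℝ) : Prop where
  meas : ∀ n : ℕ, Measurable fun ω => f ω n
  indep : iIndepFun (m := fun _ : Nat.Primes => (inferInstance : MeasurableSpace ℝ))
    (fun (p : Nat.Primes) (ω : Ω) => f ω (p : ℕ)) μ
  prob_one : ∀ p : ℕ, p.Prime → μ {ω | f ω p = 1} = 1 / 2
  prob_neg_one : ∀ p : ℕ, p.Prime → μ {ω | f ω p = -1} = 1 / 2
  eq_zero_of_not_squarefree : ∀ (ω : Ω) (n : ℕ), ¬Squarefree n → f ω n = 0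
  eq_prod_of_squarefree : ∀ (ω : Ω) (n : ℕ), Squarefree n →
    f ω n = ∏ p ∈ n.primeFactors, f ω p

lemma choose_bound (m j : ℕ) (hj : j ≤ m) :
    Nat.choose (2 * m) (2 * j) ≤ Nat.choose m j * (2 * m - 1) ^ j := by
  induction j with
  | zero => simp
  | succ j ih =>
    have ih := ih (by omega)
    obtain ⟨k, rfl⟩ : ∃ k, m = j + 1 + k := ⟨m - (j + 1), by omega⟩
    have h1 := Nat.choose_succ_right_eq (2 * (j + 1 + k)) (2 * j)
    have h2 := Nat.choose_succ_right_eq (2 * (j + 1 + k)) (2 * j + 1)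
    have h3 := Nat.choose_succ_right_eq (j + 1 + k) j
    rw [show 2 * (j + 1 + k) - 2 * j = 2 * (k + 1) by omega] at h1
    rw [show 2 * (j + 1 + k) - (2 * j + 1) = 2 * k + 1 by omega] at h2
    rw [show j + 1 + k - j = k + 1 by omega] at h3
    rw [show 2 * (j + 1) = 2 * j + 1 + 1 by ring]
    rw [show 2 * (j + 1 + k) - 1 = 2 * j + 2 * k + 1 by omega] at ih ⊢
    generalize Nat.choose (2 * (j + 1 + k)) (2 * j) = A at *
    generalize Nat.choose (2 * (j + 1 + k)) (2 * j + 1) = B at *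
    generalize Nat.choose (2 * (j + 1 + k)) (2 * j + 1 + 1) = C at *
    generalize Nat.choose (j + 1 + k) j = D at *
    generalize Nat.choose (j + 1 + k) (j + 1) = F at *
    have e : C * ((2 * j + 1) * (j + 1)) = A * ((k + 1) * (2 * k + 1)) := by
      have : 2 * (C * ((2 * j + 1) * (j + 1))) = 2 * (A * ((k + 1) * (2 * k + 1))) := by
        calc _ = (C * (2 * j + 1 + 1)) * (2 * j + 1) := by ring
          _ = (B * (2 * j + 1)) * (2 * k + 1) := by rw [h2]; ring
          _ = _ := by rw [h1]; ring
      omega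
    have : C * ((2 * j + 1) * (j + 1)) ≤
        (F * (2 * j + 2 * k + 1) ^ (j + 1)) * ((2 * j + 1) * (j + 1)) := by
      rw [e]
      calc A * ((k + 1) * (2 * k + 1))
          ≤ (D * (2 * j + 2 * k + 1) ^ j) * ((k + 1) * ((2 * j + 2 * k + 1) * (2 * j + 1))) := by
            gcongr
            nlinarith [Nat.zero_le (j * k), Nat.zero_le (j * j)]
        _ = (D * (k + 1)) * (2 * j + 2 * k + 1) ^ (j + 1) * (2 * j + 1) := by ring
        _ = _ := by rw [← h3]; ring
    exact Nat.le_of_mul_le_mul_right this (by positivity)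

lemma even_sum (n : ℕ) (x y : ℝ) :
    (x + y) ^ n + (x - y) ^ n =
      2 * ∑ k ∈ Finset.range (n + 1), if Even k then y ^ k * x ^ (n - k) * (n.choose k) else 0 := by
  rw [add_comm x y, show x - y = -y + x by ring, add_pow, add_pow, ← Finset.sum_add_distrib,
    Finset.mul_sum]
  refine Finset.sum_congr rfl fun k _ => ?_
  split_ifs with h
  · rw [h.neg_pow]; ring
  · rw [(Nat.not_even_iff_odd.1 h).neg_pow]; ring

lemma mono_B (m : ℕ) (A B C : ℝ) (hA : 0 ≤ A) (h : |B| ≤ C) :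
    (A + B) ^ m + (A - B) ^ m ≤ (A + C) ^ m + (A - C) ^ m := by
  rw [even_sum, even_sum]
  gcongr with k hk
  split_ifs with hk
  · have : B ^ k ≤ C ^ k := by
      rw [← hk.pow_abs]
      gcongr
    gcongr
  · rfl

lemma two_point_real (m : ℕ) (hm : 1 ≤ m) (x y : ℝ) :
    (x + y) ^ (2 * m) + (x - y) ^ (2 * m) ≤ 2 * (x ^ 2 + (2 * m - 1) * y ^ 2) ^ m := by
  have key : ∑ k ∈ Finset.range (2 * m + 1),
      (if Even k then y ^ k * x ^ (2 * m - k) * ((2 * m).choose k) else 0) =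
      ∑ j ∈ Finset.range (m + 1), y ^ (2 * j) * x ^ (2 * m - 2 * j) * ((2 * m).choose (2 * j)) := by
    rw [← Finset.sum_filter]
    symm
    refine Finset.sum_nbij' (fun j => 2 * j) (fun k => k / 2) ?_ ?_ ?_ ?_ ?_
    · intro j hj; simp at hj ⊢; omega
    · intro j hj; simp at hj ⊢; omega
    · intro j hj; simp
    · intro j hj; simp at hj; exact Nat.two_mul_div_two_of_even hj.2
    · intro j hj; rfl
  rw [even_sum, key, add_comm (x ^ 2), add_pow]
  refine mul_le_mul_of_nonneg_left (Finset.sum_le_sum fun j hj => ?_) (by norm_num)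
  have hj : j ≤ m := by simpa [Nat.lt_succ_iff] using hj
  have hc : (((2 * m).choose (2 * j) : ℕ) : ℝ) ≤ (m.choose j) * (2 * m - 1) ^ j := by
    have := choose_bound m j hj
    have h2 : ((2 * m - 1 : ℕ) : ℝ) = 2 * m - 1 := by
      rw [Nat.cast_sub (by omega)]; push_cast; ring
    rw [← h2]; exact_mod_cast this
  have e : x ^ (2 * m - 2 * j) = (x ^ 2) ^ (m - j) := by
    rw [← pow_mul]; congr 1; omega
  rw [e, pow_mul y]
  calc _ ≤ (y ^ 2) ^ j * (x ^ 2) ^ (m - j) * ((m.choose j) * (2 * m - 1) ^ j) := by gcongr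
    _ = _ := by rw [mul_pow]; ring

lemma two_point (m : ℕ) (hm : 1 ≤ m) (g h : ℂ) :
    ‖g + h‖ ^ (2 * m) + ‖g - h‖ ^ (2 * m) ≤ 2 * (‖g‖ ^ 2 + (2 * m - 1) * ‖h‖ ^ 2) ^ m := by
  refine le_trans ?_ (two_point_real m hm ‖g‖ ‖h‖)
  have h1 := norm_add_sq_real g h
  have h2 := norm_sub_sq_real g h
  rw [pow_mul, pow_mul, pow_mul, pow_mul, h1, h2]
  have h3 : |inner ℝ g h| ≤ ‖g‖ * ‖h‖ := abs_real_inner_le_norm g h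
  have := mono_B m (‖g‖ ^ 2 + ‖h‖ ^ 2) (2 * inner ℝ g h) (2 * (‖g‖ * ‖h‖)) (by positivity)
    (by rw [abs_mul]; simpa using h3)
  calc _ = (‖g‖ ^ 2 + ‖h‖ ^ 2 + 2 * inner ℝ g h) ^ m
        + (‖g‖ ^ 2 + ‖h‖ ^ 2 - 2 * inner ℝ g h) ^ m := by
        congr 2 <;> ring
    _ ≤ _ := this
    _ = _ := by congr 2 <;> ring

lemma minkowski {ι : Type*} (s : Finset ι) (m : ℕ) (hm : 1 ≤ m) (u v : ι → ℝ)
    (hu : ∀ i, 0 ≤ u i) (hv : ∀ i, 0 ≤ v i) (A B c : ℝ) (hA : 0 ≤ A) (hB : 0 ≤ B) (hc : 0 ≤ c)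
    (h1 : ∑ i ∈ s, u i ^ m ≤ c * A ^ m) (h2 : ∑ i ∈ s, v i ^ m ≤ c * B ^ m) :
    ∑ i ∈ s, (u i + v i) ^ m ≤ c * (A + B) ^ m := by
  have hm0 : m ≠ 0 := by omega
  have key := Real.Lp_add_le_of_nonneg (s := s) (f := u) (g := v) (p := m) (by exact_mod_cast hm)
    (fun i _ => hu i) (fun i _ => hv i)
  simp only [Real.rpow_natCast, one_div] at key
  have r : ∀ X : ℝ, 0 ≤ X → (c * X ^ m) ^ ((m : ℝ)⁻¹) = c ^ ((m : ℝ)⁻¹) * X := fun X hX => by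
    rw [Real.mul_rpow hc (by positivity), Real.pow_rpow_inv_natCast hX hm0]
  have k1 : (∑ i ∈ s, u i ^ m) ^ ((m : ℝ)⁻¹) ≤ c ^ ((m : ℝ)⁻¹) * A := by
    rw [← r A hA]
    exact Real.rpow_le_rpow (Finset.sum_nonneg fun i _ => pow_nonneg (hu i) _) h1 (by positivity)
  have k2 : (∑ i ∈ s, v i ^ m) ^ ((m : ℝ)⁻¹) ≤ c ^ ((m : ℝ)⁻¹) * B := by
    rw [← r B hB]
    exact Real.rpow_le_rpow (Finset.sum_nonneg fun i _ => pow_nonneg (hv i) _) h2 (by positivity)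
  have hs : 0 ≤ ∑ i ∈ s, (u i + v i) ^ m :=
    Finset.sum_nonneg fun i _ => pow_nonneg (add_nonneg (hu i) (hv i)) _
  have k3 : (∑ i ∈ s, (u i + v i) ^ m) ^ ((m : ℝ)⁻¹) ≤ (c * (A + B) ^ m) ^ ((m : ℝ)⁻¹) := by
    rw [r _ (by positivity)]; linarith
  exact (Real.rpow_le_rpow_iff hs (by positivity) (by positivity)).1 k3

lemma bonami {ι : Type*} [DecidableEq ι] (m : ℕ) (hm : 1 ≤ m) (s : Finset ι) :
    ∀ b : Finset ι → ℂ,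
    ∑ T ∈ s.powerset, ‖∑ S ∈ s.powerset, b S * ∏ p ∈ S, (if p ∈ T then (-1 : ℂ) else 1)‖ ^ (2 * m)
      ≤ 2 ^ s.card * (∑ S ∈ s.powerset, ‖b S‖ ^ 2 * (2 * m - 1) ^ S.card) ^ m := by
  have hq : (0 : ℝ) ≤ 2 * m - 1 := by
    have : (1 : ℝ) ≤ m := by exact_mod_cast hm
    linarith
  induction s using Finset.induction_on with
  | empty => intro b; simp [pow_mul]
  | insert x s hx ih =>
    intro b
    rw [Finset.sum_powerset_insert hx, Finset.sum_powerset_insert hx, ← Finset.sum_add_distrib]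
    set G : Finset ι → ℂ := fun T =>
      ∑ S ∈ s.powerset, b S * ∏ p ∈ S, (if p ∈ T then (-1 : ℂ) else 1) with hG
    set H : Finset ι → ℂ := fun T =>
      ∑ S ∈ s.powerset, b (insert x S) * ∏ p ∈ S, (if p ∈ T then (-1 : ℂ) else 1) with hH
    have hne : ∀ S ∈ s.powerset, x ∉ S := fun S hS hxS => hx (Finset.mem_powerset.1 hS hxS)
    have e1 : ∀ T ∈ s.powerset, ∑ S ∈ (insert x s).powerset,
        b S * ∏ p ∈ S, (if p ∈ T then (-1 : ℂ) else 1) = G T + H T := by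
      intro T hT
      rw [Finset.sum_powerset_insert hx]
      congr 1
      refine Finset.sum_congr rfl fun S hS => ?_
      rw [Finset.prod_insert (hne S hS), if_neg (hne T hT), one_mul]
    have e2 : ∀ T ∈ s.powerset, ∑ S ∈ (insert x s).powerset,
        b S * ∏ p ∈ S, (if p ∈ insert x T then (-1 : ℂ) else 1) = G T - H T := by
      intro T hT
      have e3 : ∀ S ∈ s.powerset, ∏ p ∈ S, (if p ∈ insert x T then (-1 : ℂ) else 1) =
          ∏ p ∈ S, (if p ∈ T then (-1 : ℂ) else 1) := by
        intro S hS
        refine Finset.prod_congr rfl fun p hp => ?_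
        have : p ≠ x := fun h => hne S hS (h ▸ hp)
        simp [this]
      rw [Finset.sum_powerset_insert hx, sub_eq_add_neg, hH, ← Finset.sum_neg_distrib]
      congr 1
      · exact Finset.sum_congr rfl fun S hS => by rw [e3 S hS]
      · refine Finset.sum_congr rfl fun S hS => ?_
        rw [Finset.prod_insert (hne S hS), if_pos (Finset.mem_insert_self _ _), e3 S hS]
        ring
    rw [Finset.card_insert_of_notMem hx]
    set A := ∑ S ∈ s.powerset, ‖b S‖ ^ 2 * (2 * (m : ℝ) - 1) ^ S.card with hA
    set B := ∑ S ∈ s.powerset, ‖b (insert x S)‖ ^ 2 * (2 * (m : ℝ) - 1) ^ S.card with hB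
    have eB : ∑ S ∈ s.powerset, ‖b (insert x S)‖ ^ 2 * (2 * (m : ℝ) - 1) ^ (insert x S).card
        = (2 * m - 1) * B := by
      rw [hB, Finset.mul_sum]
      refine Finset.sum_congr rfl fun S hS => ?_
      rw [Finset.card_insert_of_notMem (hne S hS)]; ring
    have hA0 : 0 ≤ A := Finset.sum_nonneg fun S _ => by positivity
    have hB0 : 0 ≤ B := Finset.sum_nonneg fun S _ => by positivity
    rw [eB]
    calc _ ≤ ∑ T ∈ s.powerset, 2 * (‖G T‖ ^ 2 + (2 * m - 1) * ‖H T‖ ^ 2) ^ m := by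
          refine Finset.sum_le_sum fun T hT => ?_
          rw [e1 T hT, e2 T hT]
          exact two_point m hm _ _
      _ = 2 * ∑ T ∈ s.powerset, (‖G T‖ ^ 2 + (2 * m - 1) * ‖H T‖ ^ 2) ^ m := by
          rw [Finset.mul_sum]
      _ ≤ 2 * (2 ^ s.card * (A + (2 * m - 1) * B) ^ m) := by
          gcongr
          refine minkowski _ m hm _ _ (fun T => by positivity) (fun T => by positivity) _ _ _
            hA0 (by positivity) (by positivity) ?_ ?_
          · simpa only [← pow_mul] using ih b
          · have := ih (fun S => b (insert x S))
            simp only [mul_pow, ← Finset.mul_sum, ← pow_mul]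
            rw [mul_left_comm]
            gcongr
      _ = _ := by ring

lemma integral_signs {Ω ι : Type*} [DecidableEq ι] [MeasurableSpace Ω] (μ : Measure Ω)
    [IsProbabilityMeasure μ] (g : ι → Ω → ℝ) (hg : ∀ i, Measurable (g i))
    (hind : iIndepFun g μ) (h1 : ∀ i, μ {ω | g i ω = 1} = 1 / 2)
    (h2 : ∀ i, μ {ω | g i ω = -1} = 1 / 2) (s : Finset ι) (Φ : (ι → ℝ) → ℝ)
    (hΦ : ∀ x y : ι → ℝ, (∀ i ∈ s, x i = y i) → Φ x = Φ y) :
    ∫ ω, Φ (fun i => g i ω) ∂μ =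
      (2 ^ s.card)⁻¹ * ∑ T ∈ s.powerset, Φ (fun i => if i ∈ T then -1 else 1) := by
  set E : Finset ι → Set Ω := fun T => ⋂ i ∈ s, g i ⁻¹' {if i ∈ T then (-1 : ℝ) else 1} with hE
  have mE : ∀ T, MeasurableSet (E T) := fun T =>
    Finset.measurableSet_biInter _ fun i _ => hg i (measurableSet_singleton _)
  have pE : ∀ T, μ.real (E T) = (2 ^ s.card)⁻¹ := by
    intro T
    have := hind.measure_inter_preimage_eq_mul s
      (sets := fun i => {if i ∈ T then (-1 : ℝ) else 1}) (fun i _ => measurableSet_singleton _)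
    rw [Measure.real, hE]
    simp only
    rw [this, Finset.prod_congr rfl (g := fun _ => (1 / 2 : ENNReal))]
    · simp
    · intro i _
      by_cases hi : i ∈ T
      · simpa [hi, Set.preimage] using h2 i
      · simpa [hi, Set.preimage] using h1 i
  have hae : ∀ i, ∀ᵐ ω ∂μ, g i ω = 1 ∨ g i ω = -1 := by
    intro i
    have hm1 : MeasurableSet {ω | g i ω = 1} := hg i (measurableSet_singleton _)
    have hm2 : MeasurableSet {ω | g i ω = -1} := hg i (measurableSet_singleton _)
    have hd : Disjoint {ω | g i ω = 1} {ω | g i ω = -1} := by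
      rw [Set.disjoint_left]; intro ω h h'; simp only [Set.mem_ofPred_eq] at h h'; linarith
    have hu : μ ({ω | g i ω = 1} ∪ {ω | g i ω = -1}) = 1 := by
      rw [measure_union hd hm2, h1, h2, ENNReal.add_halves]
    have := (prob_compl_eq_zero_iff (hm1.union hm2)).2 hu
    exact this
  have hall : ∀ᵐ ω ∂μ, ∀ i ∈ s, g i ω = 1 ∨ g i ω = -1 :=
    (Finset.eventually_all s).2 fun i _ => hae i
  have heq : (fun ω => Φ (fun i => g i ω)) =ᵐ[μ] fun ω => ∑ T ∈ s.powerset,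
      (E T).indicator (fun _ => Φ (fun i => if i ∈ T then -1 else 1)) ω := by
    filter_upwards [hall] with ω hω
    set T₀ := s.filter fun i => g i ω = -1 with hT₀
    have hval : ∀ i ∈ s, g i ω = if i ∈ T₀ then -1 else 1 := by
      intro i hi
      rcases hω i hi with h | h
      · simp [hT₀, hi, h]
      · simp [hT₀, hi, h]
    rw [Finset.sum_eq_single T₀]
    · rw [Set.indicator_of_mem]
      · exact hΦ _ _ hval
      · simpa [hE] using hval
    · intro T hT hne
      rw [Set.indicator_of_notMem]
      intro hmem
      apply hne
      simp only [hE, Set.mem_iInter, Set.mem_preimage, Set.mem_singleton_iff] at hmem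
      have hTs := Finset.mem_powerset.1 hT
      ext i
      constructor
      · intro hi
        have := hmem i (hTs hi)
        rw [if_pos hi] at this
        exact Finset.mem_filter.2 ⟨hTs hi, this⟩
      · intro hi
        obtain ⟨his, hi⟩ := Finset.mem_filter.1 hi
        by_contra hc
        have := hmem i his
        rw [if_neg hc] at this
        linarith
    · intro h; exact absurd (Finset.mem_powerset.2 (Finset.filter_subset _ _)) h
  rw [integral_congr_ae heq, integral_finsetSum, Finset.mul_sum]
  · refine Finset.sum_congr rfl fun T _ => ?_
    rw [integral_indicator_const _ (mE T), pE, smul_eq_mul]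
  · intro T _
    exact (integrable_const _).indicator (mE T)

lemma sum_squarefree {M : Type*} [AddCommMonoid M] (N : ℕ) (F : ℕ → M) (G : Finset (Subtype Nat.Prime) → M)
    (h : ∀ n, Squarefree n → F n = G (n.primeFactors.subtype Nat.Prime)) :
    ∑ n ∈ (Finset.Icc 1 N).filter Squarefree, F n =
      ∑ S ∈ ((Finset.range (N + 1)).subtype Nat.Prime).powerset,
        if ∏ p ∈ S, p.1 ≤ N then G S else 0 := by
  have inv1 : ∀ n : ℕ, Squarefree n → ∏ p ∈ n.primeFactors.subtype Nat.Prime, (p : ℕ) = n := by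
    intro n hn
    rw [Finset.prod_subtype_of_mem (p := Nat.Prime) (fun p => p) (fun p hp => Nat.prime_of_mem_primeFactors hp)]
    exact Nat.prod_primeFactors_of_squarefree hn
  have inv2 : ∀ S : Finset (Subtype Nat.Prime),
      (∏ p ∈ S, p.1).primeFactors.subtype Nat.Prime = S := by
    intro S
    have : ∏ p ∈ S, p.1 = ∏ p ∈ S.map (Function.Embedding.subtype _), p := by
      rw [Finset.prod_map]; rfl
    rw [this, Nat.primeFactors_prod]
    · ext p; simp [p.2]
    · intro p hp
      obtain ⟨q, _, rfl⟩ := Finset.mem_map.1 hp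
      exact q.2
  have sq : ∀ S : Finset (Subtype Nat.Prime), Squarefree (∏ p ∈ S, p.1) := by
    intro S
    refine Finset.squarefree_prod_of_pairwise_isCoprime ?_ ?_
    · intro p _ q _ hpq
      rw [Function.onFun, ← Nat.coprime_iff_isRelPrime]
      exact (Nat.coprime_primes p.2 q.2).2 fun h => hpq (Subtype.ext h)
    · intro p _; exact p.2.prime.squarefree
  rw [← Finset.sum_filter]
  refine Finset.sum_nbij' (fun n => n.primeFactors.subtype Nat.Prime)
    (fun S => ∏ p ∈ S, p.1) ?_ ?_ ?_ ?_ ?_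
  · intro n hn
    simp only [Finset.mem_filter, Finset.mem_Icc] at hn
    rw [Finset.mem_filter, Finset.mem_powerset, inv1 n hn.2]
    refine ⟨fun p hp => ?_, hn.1.2⟩
    rw [Finset.mem_subtype] at hp ⊢
    rw [Finset.mem_range]
    have := Nat.le_of_mem_primeFactors hp
    omega
  · intro S hS
    simp only [Finset.mem_filter] at hS
    simp only [Finset.mem_filter, Finset.mem_Icc]
    exact ⟨⟨Nat.one_le_iff_ne_zero.2 (sq S).ne_zero, hS.2⟩, sq S⟩
  · intro n hn; exact inv1 n (Finset.mem_filter.1 hn).2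
  · intro S _; exact inv2 S
  · intro n hn; exact h n (Finset.mem_filter.1 hn).2

lemma dFold_squarefree (k n : ℕ) (hn : Squarefree n) :
    dFold k n = k ^ (n.primeFactors.subtype Nat.Prime).card := by
  have h1 : dFold k n = (Nat.finMulAntidiag k n).card := by
    rw [dFold]
    exact Nat.subtype_card _ fun v => by simp [hn.ne_zero]
  rw [h1, Nat.card_finMulAntidiag_of_squarefree hn,
    ArithmeticFunction.cardDistinctFactors_apply, ← List.card_toFinset, Finset.card_subtype]
  congr 2
  ext p
  simp +contextual

/-- Hypercontractive inequality, Rademacher case: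
`E[|∑_{n ≥ 1} aₙ f(n)|^{2m}] ≤ (∑_{n ≥ 1} |aₙ|² d_{2m-1}(n))^m`
for finitely supported sequences `(aₙ)_{n ≥ 1}` of complex numbers. -/
theorem hypercontractive_rademacher
    {Ω : Type*} [MeasurableSpace Ω] (μ : Measure Ω) [IsProbabilityMeasure μ]
    (f : Ω → ℕ → ℝ) (hf : IsRademacherRMF μ f)
    (a : ℕ → ℂ) (N : ℕ) (m : ℕ) (hm : 1 ≤ m) :
    ∫ ω, ‖∑ n ∈ Finset.Icc 1 N, a n * (f ω n : ℂ)‖ ^ (2 * m) ∂μ ≤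
      (∑ n ∈ Finset.Icc 1 N, ‖a n‖ ^ 2 * (dFold (2 * m - 1) n : ℝ)) ^ m := by
  set s : Finset (Subtype Nat.Prime) := (Finset.range (N + 1)).subtype Nat.Prime with hs
  set b : Finset (Subtype Nat.Prime) → ℂ := fun S =>
    if ∏ p ∈ S, p.1 ≤ N then a (∏ p ∈ S, p.1) else 0 with hb
  have inv1 : ∀ n : ℕ, Squarefree n → ∏ p ∈ n.primeFactors.subtype Nat.Prime, (p : ℕ) = n := by
    intro n hn
    rw [Finset.prod_subtype_of_mem (p := Nat.Prime) (fun p => p)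
      (fun p hp => Nat.prime_of_mem_primeFactors hp)]
    exact Nat.prod_primeFactors_of_squarefree hn
  have hL : ∀ ω, ∑ n ∈ Finset.Icc 1 N, a n * (f ω n : ℂ) =
      ∑ S ∈ s.powerset, b S * ∏ p ∈ S, ((f ω p.1 : ℝ) : ℂ) := by
    intro ω
    have e1 : ∑ n ∈ Finset.Icc 1 N, a n * (f ω n : ℂ) =
        ∑ n ∈ (Finset.Icc 1 N).filter Squarefree, a n * (f ω n : ℂ) := by
      refine (Finset.sum_filter_of_ne fun n _ h => ?_).symm
      by_contra hc
      exact h (by rw [hf.eq_zero_of_not_squarefree ω n hc]; simp)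
    rw [e1, sum_squarefree N (fun n => a n * (f ω n : ℂ))
      (fun S => a (∏ p ∈ S, p.1) * ∏ p ∈ S, ((f ω p.1 : ℝ) : ℂ))]
    · refine Finset.sum_congr rfl fun S _ => ?_
      simp only [hb]
      split_ifs <;> simp
    · intro n hn
      rw [inv1 n hn, hf.eq_prod_of_squarefree ω n hn,
        Finset.prod_subtype_of_mem (p := Nat.Prime) (fun p => ((f ω p : ℝ) : ℂ))
          (fun p hp => Nat.prime_of_mem_primeFactors hp), Complex.ofReal_prod]
  have hR : ∑ S ∈ s.powerset, ‖b S‖ ^ 2 * (2 * (m : ℝ) - 1) ^ S.card ≤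
      ∑ n ∈ Finset.Icc 1 N, ‖a n‖ ^ 2 * (dFold (2 * m - 1) n : ℝ) := by
    have e2 : ∑ n ∈ (Finset.Icc 1 N).filter Squarefree, ‖a n‖ ^ 2 * (dFold (2 * m - 1) n : ℝ) =
        ∑ S ∈ s.powerset, ‖b S‖ ^ 2 * (2 * (m : ℝ) - 1) ^ S.card := by
      rw [sum_squarefree N _ (fun S => ‖a (∏ p ∈ S, p.1)‖ ^ 2 * (2 * (m : ℝ) - 1) ^ S.card)]
      · refine Finset.sum_congr rfl fun S _ => ?_
        simp only [hb]
        split_ifs <;> simp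
      · intro n hn
        have h2 : ((2 * m - 1 : ℕ) : ℝ) = 2 * m - 1 := by
          rw [Nat.cast_sub (by omega)]; push_cast; ring
        rw [inv1 n hn, dFold_squarefree _ n hn, Nat.cast_pow, h2]
    rw [← e2]
    exact Finset.sum_le_sum_of_subset_of_nonneg (Finset.filter_subset _ _)
      fun n _ _ => by positivity
  have hq : (0 : ℝ) ≤ 2 * m - 1 := by
    have : (1 : ℝ) ≤ m := by exact_mod_cast hm
    linarith
  have hI := integral_signs μ (fun (p : Subtype Nat.Prime) ω => f ω p.1) (fun p => hf.meas p.1)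
    hf.indep (fun p => hf.prob_one p.1 p.2) (fun p => hf.prob_neg_one p.1 p.2) s
    (fun x => ‖∑ S ∈ s.powerset, b S * ∏ p ∈ S, ((x p : ℝ) : ℂ)‖ ^ (2 * m)) (by
      intro x y hxy
      congr 2
      refine Finset.sum_congr rfl fun S hS => ?_
      congr 1
      exact Finset.prod_congr rfl fun p hp => by rw [hxy p (Finset.mem_powerset.1 hS hp)])
  simp only [hL]
  rw [hI]
  have hB := bonami m hm s b
  have hcast : ∀ (T : Finset (Subtype Nat.Prime)) (p : Subtype Nat.Prime),
      (((if p ∈ T then (-1) else 1 : ℝ)) : ℂ) = if p ∈ T then (-1 : ℂ) else 1 := by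
    intro T p; split_ifs <;> simp
  simp only [hcast]
  calc _ ≤ ((2 : ℝ) ^ s.card)⁻¹ *
        (2 ^ s.card * (∑ S ∈ s.powerset, ‖b S‖ ^ 2 * (2 * m - 1) ^ S.card) ^ m) := by
        gcongr
    _ = (∑ S ∈ s.powerset, ‖b S‖ ^ 2 * (2 * (m : ℝ) - 1) ^ S.card) ^ m := by
        rw [← mul_assoc, inv_mul_cancel₀ (by positivity), one_mul]
    _ ≤ _ := by
        refine pow_le_pow_left₀ (Finset.sum_nonneg fun S _ => by positivity) hR m
end
end

section
/- (Hypercontractive inequality, Steinhaus case.) Let f be a Steinhaus random multiplicative function, let (a_n)_{n ≥ 1} be a finitely supported sequence of complex numbers, and let m ≥ 1 be an integer. Then E[|∑_{n ≥ 1} a_n f(n)|^{2m}] ≤ (∑_{n ≥ 1} |a_n|² d_{2m−1}(n))^m. -/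
open MeasureTheory ProbabilityTheory Real

noncomputable section

/-- A Steinhaus random multiplicative function. -/
structure IsSteinhausRMF {Ω : Type*} [MeasurableSpace Ω] (μ : Measure Ω)
    (f : Ω → ℕ → ℂ) : Prop where
  meas : ∀ n : ℕ, Measurable fun ω => f ω n
  indep : iIndepFun (m := fun _ : Nat.Primes => (inferInstance : MeasurableSpace ℂ))
    (fun (p : Nat.Primes) (ω : Ω) => f ω (p : ℕ)) μ
  unif : ∀ p : ℕ, p.Prime →
    Measure.map (fun ω => f ω p) μ =
      Measure.map (fun θ : ℝ => Complex.exp (2 * π * θ * Complex.I))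
        (volume.restrict (Set.Ioc (0 : ℝ) 1))
  map_one : ∀ ω : Ω, f ω 1 = 1
  map_mul : ∀ (ω : Ω) (m n : ℕ), 1 ≤ m → 1 ≤ n → f ω (m * n) = f ω m * f ω n

theorem dFold_finite (k n : ℕ) (hn : 1 ≤ n) : Finite {v : Fin k → ℕ // ∏ i, v i = n} := by
  have hlt : ∀ (v : {v : Fin k → ℕ // ∏ i, v i = n}) (i : Fin k), v.1 i < n + 1 := by
    intro v i
    have : v.1 i ∣ n := by
      exact (Finset.dvd_prod_of_mem v.1 (Finset.mem_univ i)).trans (dvd_of_eq v.2)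
    have := Nat.le_of_dvd hn this
    omega
  refine Finite.of_injective
    (fun v => (fun i => (⟨v.1 i, hlt v i⟩ : Fin (n + 1)))) ?_
  intro v w h
  ext i
  have := congrFun h i
  simpa using this

theorem dFold_succ (k n : ℕ) (hn : 1 ≤ n) : dFold k n ≤ dFold (k + 1) n := by
  have := dFold_finite (k + 1) n hn
  refine Nat.card_le_card_of_injective
    (fun v : {v : Fin k → ℕ // ∏ i, v i = n} =>
      (⟨Fin.cons 1 v.1, by rw [Fin.prod_univ_succ]; simp [v.2]⟩ :
        {v : Fin (k + 1) → ℕ // ∏ i, v i = n})) ?_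
  intro v w h
  have h' := congrArg Subtype.val h
  exact Subtype.ext (Fin.cons_right_injective (α := fun _ => ℕ) _ h')

theorem dFold_mono (k l n : ℕ) (hn : 1 ≤ n) (h : k ≤ l) : dFold k n ≤ dFold l n :=
  monotone_nat_of_le_succ (f := fun k => dFold k n) (fun k => dFold_succ k n hn) h

theorem split_prod (k : ℕ) : ∀ (v : Fin k → ℕ) (a b : ℕ), 1 ≤ a → 1 ≤ b → ∏ i, v i = a * b →
    ∃ u w : Fin k → ℕ, (∏ i, u i = a) ∧ (∏ i, w i = b) ∧ ∀ i, u i * w i = v i := by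
  induction k with
  | zero =>
    intro v a b ha hb h
    simp only [Finset.univ_eq_empty, Finset.prod_empty] at h
    have h1 := Nat.eq_one_of_mul_eq_one_right h.symm
    have h2 := Nat.eq_one_of_mul_eq_one_left h.symm
    exact ⟨v, v, by simp [h1], by simp [h2], fun i => i.elim0⟩
  | succ k ih =>
    intro v a b ha hb h
    rw [Fin.prod_univ_succ] at h
    obtain ⟨a0, b0, ⟨a', rfl⟩, ⟨b', rfl⟩, h0⟩ :=
      exists_dvd_and_dvd_of_dvd_mul (Dvd.intro _ h)
    have ha0 : 0 < a0 := Nat.pos_of_mul_pos_right ha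
    have hb0 : 0 < b0 := Nat.pos_of_mul_pos_right hb
    have ha' : 0 < a' := Nat.pos_of_mul_pos_left ha
    have hb' : 0 < b' := Nat.pos_of_mul_pos_left hb
    have h3 : ∏ i : Fin k, v i.succ = a' * b' := by
      rw [h0] at h
      have : (a0 * b0) * ∏ i : Fin k, v i.succ = (a0 * b0) * (a' * b') := by
        rw [h]; ring
      exact Nat.eq_of_mul_eq_mul_left (Nat.mul_pos ha0 hb0) this
    obtain ⟨u, w, hu, hw, huw⟩ := ih (fun i => v i.succ) a' b' ha' hb' h3
    refine ⟨Fin.cons a0 u, Fin.cons b0 w, ?_, ?_, ?_⟩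
    · rw [Fin.prod_univ_succ]; simp [hu]
    · rw [Fin.prod_univ_succ]; simp [hw]
    · intro i
      refine Fin.cases ?_ (fun j => ?_) i
      · simp [h0]
      · simp [huw]

theorem dFold_mul (k a b : ℕ) (ha : 1 ≤ a) (hb : 1 ≤ b) :
    dFold k (a * b) ≤ dFold k a * dFold k b := by
  have := dFold_finite k a ha
  have := dFold_finite k b hb
  unfold dFold
  rw [← Nat.card_prod]
  refine Nat.card_le_card_of_surjective
    (fun q : {v : Fin k → ℕ // ∏ i, v i = a} × {v : Fin k → ℕ // ∏ i, v i = b} =>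
      (⟨fun i => q.1.1 i * q.2.1 i, by rw [Finset.prod_mul_distrib, q.1.2, q.2.2]⟩ :
        {v : Fin k → ℕ // ∏ i, v i = a * b})) ?_
  rintro ⟨v, hv⟩
  obtain ⟨u, w, hu, hw, huw⟩ := split_prod k v a b ha hb hv
  exact ⟨(⟨u, hu⟩, ⟨w, hw⟩), Subtype.ext (funext huw)⟩

theorem dFold_one (k : ℕ) : dFold k 1 ≤ 1 := by
  unfold dFold
  have : Subsingleton {v : Fin k → ℕ // ∏ i, v i = 1} := by
    constructor
    rintro ⟨v, hv⟩ ⟨w, hw⟩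
    rw [Finset.prod_eq_one_iff] at hv hw
    ext i
    simp [hv i (Finset.mem_univ i), hw i (Finset.mem_univ i)]
  exact Finite.card_le_one_iff_subsingleton.mpr this

theorem dFold_prod {ι : Type*} (k : ℕ) (s : Finset ι) (v : ι → ℕ) (hv : ∀ i ∈ s, 1 ≤ v i) :
    dFold k (∏ i ∈ s, v i) ≤ ∏ i ∈ s, dFold k (v i) := by
  classical
  induction s using Finset.induction_on with
  | empty => simpa using dFold_one k
  | insert j s hj ih =>
    rw [Finset.prod_insert hj, Finset.prod_insert hj]
    refine (dFold_mul k _ _ (hv j (by simp)) ?_).trans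
      (Nat.mul_le_mul_left _ (ih fun i hi => hv i (by simp [hi])))
    exact Finset.one_le_prod' fun i hi => hv i (by simp [hi])

theorem combin (m N : ℕ) (a : ℕ → ℂ) (T : Finset ℕ) (hT : ∀ k ∈ T, 1 ≤ k)
    (S : Finset (Fin m → ℕ)) (hS : S = Fintype.piFinset fun _ => Finset.Icc 1 N)
    (hST : ∀ v ∈ S, ∏ i, v i ∈ T) :
    ∑ k ∈ T, ‖∑ v ∈ S with ∏ i, v i = k, ∏ i, a (v i)‖ ^ 2 ≤
      (∑ n ∈ Finset.Icc 1 N, ‖a n‖ ^ 2 * (dFold m n : ℝ)) ^ m := by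
  calc _ ≤ ∑ k ∈ T, ∑ v ∈ S with ∏ i, v i = k, (dFold m (∏ i, v i) : ℝ) * ∏ i, ‖a (v i)‖ ^ 2 := by
        refine Finset.sum_le_sum fun k hk => ?_
        calc _ ≤ (∑ v ∈ S with ∏ i, v i = k, ‖∏ i, a (v i)‖) ^ 2 := by
              gcongr; exact norm_sum_le _ _
          _ ≤ ((S.filter fun v => ∏ i, v i = k).card : ℝ) *
                ∑ v ∈ S with ∏ i, v i = k, ‖∏ i, a (v i)‖ ^ 2 := sq_sum_le_card_mul_sum_sq
          _ ≤ (dFold m k : ℝ) * ∑ v ∈ S with ∏ i, v i = k, ‖∏ i, a (v i)‖ ^ 2 := by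
              gcongr
              have := dFold_finite m k (hT k hk)
              rw [← Nat.card_eq_finsetCard]
              refine Nat.card_le_card_of_injective
                (fun v => ⟨v.1, (Finset.mem_filter.mp v.2).2⟩) ?_
              intro v w h
              exact Subtype.ext (Subtype.mk.inj h)
          _ = _ := by
              rw [Finset.mul_sum]
              refine Finset.sum_congr rfl fun v hv => ?_
              rw [(Finset.mem_filter.mp hv).2, norm_prod, Finset.prod_pow]
    _ = ∑ v ∈ S, (dFold m (∏ i, v i) : ℝ) * ∏ i, ‖a (v i)‖ ^ 2 :=
        Finset.sum_fiberwise_of_maps_to hST _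
    _ ≤ ∑ v ∈ S, ∏ i, (‖a (v i)‖ ^ 2 * (dFold m (v i) : ℝ)) := by
        refine Finset.sum_le_sum fun v hv => ?_
        rw [Finset.prod_mul_distrib, mul_comm]
        gcongr
        rw [hS] at hv
        exact_mod_cast dFold_prod m Finset.univ v fun i _ =>
          (Finset.mem_Icc.mp (Fintype.mem_piFinset.mp hv i)).1
    _ = _ := by
        rw [hS, Finset.sum_pow']


theorem prime_moment {Ω : Type*} [MeasurableSpace Ω] (μ : Measure Ω) [IsProbabilityMeasure μ]
    (f : Ω → ℕ → ℂ) (hf : IsSteinhausRMF μ f) (p : ℕ) (hp : p.Prime) (α β : ℕ) (h : α ≠ β) :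
    ∫ ω, (f ω p) ^ α * (starRingEnd ℂ (f ω p)) ^ β ∂μ = 0 := by
  have hc : Continuous fun z : ℂ => z ^ α * (starRingEnd ℂ z) ^ β := by fun_prop
  have he : Continuous fun θ : ℝ => Complex.exp (2 * π * θ * Complex.I) := by fun_prop
  have h1 := integral_map (μ := μ) (hf.meas p).aemeasurable
    (hc.aestronglyMeasurable (μ := Measure.map (fun ω => f ω p) μ))
  rw [← h1, hf.unif p hp, integral_map he.measurable.aemeasurable hc.aestronglyMeasurable,
    ← intervalIntegral.integral_of_le zero_le_one]
  have hαβ : ((α : ℂ) - β) ≠ 0 := sub_ne_zero.mpr (by exact_mod_cast h)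
  have hne : 2 * π * Complex.I * ((α : ℂ) - β) ≠ 0 :=
    mul_ne_zero Complex.two_pi_I_ne_zero hαβ
  have h2 : ∀ θ : ℝ, Complex.exp (2 * π * θ * Complex.I) ^ α *
      (starRingEnd ℂ (Complex.exp (2 * π * θ * Complex.I))) ^ β =
      Complex.exp (2 * π * Complex.I * ((α : ℂ) - β) * θ) := by
    intro θ
    rw [← Complex.exp_conj, ← Complex.exp_nat_mul, ← Complex.exp_nat_mul, ← Complex.exp_add]
    congr 1
    have h22 : (starRingEnd ℂ) (2 : ℂ) = 2 := Complex.conj_ofNat 2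
    simp [Complex.conj_ofReal, h22]
    ring
  simp_rw [h2]
  rw [integral_exp_mul_complex hne]
  have h3 : Complex.exp (2 * π * Complex.I * ((α : ℂ) - β) * (1 : ℝ)) = 1 := by
    rw [Complex.exp_eq_one_iff]
    exact ⟨(α : ℤ) - β, by push_cast; ring⟩
  rw [h3]
  simp

theorem ae_norm {Ω : Type*} [MeasurableSpace Ω] (μ : Measure Ω)
    (f : Ω → ℕ → ℂ) (hf : IsSteinhausRMF μ f) :
    ∀ᵐ ω ∂μ, ∀ n : ℕ, 1 ≤ n → ‖f ω n‖ = 1 := by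
  have h1 : ∀ᵐ ω ∂μ, ∀ p : ℕ, p.Prime → ‖f ω p‖ = 1 := by
    rw [ae_all_iff]
    intro p
    by_cases hp : p.Prime
    · have he : Continuous fun θ : ℝ => Complex.exp (2 * π * θ * Complex.I) := by fun_prop
      have hs : MeasurableSet {z : ℂ | ‖z‖ = 1} := measurableSet_eq_fun (by fun_prop) (by fun_prop)
      have h2 : ∀ᵐ z ∂(Measure.map (fun ω => f ω p) μ), ‖z‖ = 1 := by
        rw [hf.unif p hp, ae_map_iff he.measurable.aemeasurable hs]
        refine Filter.Eventually.of_forall fun θ => ?_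
        have := Complex.norm_exp_ofReal_mul_I (2 * π * θ)
        push_cast at this
        exact this
      rw [ae_map_iff (hf.meas p).aemeasurable hs] at h2
      filter_upwards [h2] with ω hω _ using hω
    · exact Filter.Eventually.of_forall fun ω h => absurd h hp
  filter_upwards [h1] with ω hω n
  induction n using Nat.recOnMul with
  | zero => intro h; omega
  | one => intro _; simp [hf.map_one]
  | prime p hp => intro _; exact hω p hp
  | mul a b iha ihb =>
    intro h
    have ha : 1 ≤ a := Nat.pos_of_mul_pos_right h
    have hb : 1 ≤ b := Nat.pos_of_mul_pos_left h
    rw [hf.map_mul ω a b ha hb, norm_mul, iha ha, ihb hb, one_mul]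

theorem f_prod {Ω : Type*} [MeasurableSpace Ω] (μ : Measure Ω)
    (f : Ω → ℕ → ℂ) (hf : IsSteinhausRMF μ f) (ω : Ω) {ι : Type*} (s : Finset ι) (v : ι → ℕ)
    (hv : ∀ i ∈ s, 1 ≤ v i) : f ω (∏ i ∈ s, v i) = ∏ i ∈ s, f ω (v i) := by
  classical
  induction s using Finset.induction_on with
  | empty => simpa using hf.map_one ω
  | insert j s hj ih =>
    rw [Finset.prod_insert hj, Finset.prod_insert hj,
      hf.map_mul ω _ _ (hv j (by simp)) (Finset.one_le_prod' fun i hi => hv i (by simp [hi])),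
      ih fun i hi => hv i (by simp [hi])]

theorem f_pow {Ω : Type*} [MeasurableSpace Ω] (μ : Measure Ω)
    (f : Ω → ℕ → ℂ) (hf : IsSteinhausRMF μ f) (ω : Ω) (n k : ℕ) (hn : 1 ≤ n) :
    f ω (n ^ k) = f ω n ^ k := by
  simpa using f_prod μ f hf ω (Finset.range k) (fun _ => n) (fun _ _ => hn)

theorem f_factor {Ω : Type*} [MeasurableSpace Ω] (μ : Measure Ω)
    (f : Ω → ℕ → ℂ) (hf : IsSteinhausRMF μ f) (ω : Ω) (n : ℕ) (hn : 1 ≤ n) (s : Finset ℕ)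
    (hs : n.primeFactors ⊆ s) (hp : ∀ p ∈ s, p.Prime) :
    f ω n = ∏ p : s, f ω p ^ n.factorization p := by
  have h1 : ∏ p ∈ s, p ^ n.factorization p = n := by
    conv_rhs => rw [← Nat.prod_factorization_pow_eq_self (n := n) (by omega)]
    rw [Finsupp.prod_of_support_subset _ (by simpa using hs) _ (by simp)]
  conv_lhs => rw [← h1]
  rw [f_prod μ f hf ω s _ (fun p h => Nat.one_le_pow _ _ (hp p h).pos),
    ← Finset.prod_coe_sort]
  exact Finset.prod_congr rfl fun p _ => f_pow μ f hf ω _ _ (hp p p.2).one_lt.le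

theorem ortho {Ω : Type*} [MeasurableSpace Ω] (μ : Measure Ω) [IsProbabilityMeasure μ]
    (f : Ω → ℕ → ℂ) (hf : IsSteinhausRMF μ f) (k l : ℕ) (hk : 1 ≤ k) (hl : 1 ≤ l) :
    ∫ ω, f ω k * starRingEnd ℂ (f ω l) ∂μ = if k = l then 1 else 0 := by
  split_ifs with h
  · subst h
    have : (fun ω => f ω k * starRingEnd ℂ (f ω k)) =ᵐ[μ] fun _ => 1 := by
      filter_upwards [ae_norm μ f hf] with ω hω
      rw [Complex.mul_conj, Complex.normSq_eq_norm_sq, hω k hk]; simp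
    rw [integral_congr_ae this]; simp
  · let s := k.primeFactors ∪ l.primeFactors
    have hs : ∀ p ∈ s, p.Prime := by
      intro p hp
      rcases Finset.mem_union.mp hp with h | h <;> exact Nat.prime_of_mem_primeFactors h
    have h1 : ∀ ω, f ω k * starRingEnd ℂ (f ω l) =
        ∏ p : s, (f ω p ^ k.factorization p * (starRingEnd ℂ (f ω p)) ^ l.factorization p) := by
      intro ω
      rw [f_factor μ f hf ω k hk s Finset.subset_union_left hs,
        f_factor μ f hf ω l hl s Finset.subset_union_right hs, map_prod,
        Finset.prod_mul_distrib]
      simp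
    simp_rw [h1]
    have hi : iIndepFun (fun (p : s) (ω : Ω) => f ω p) μ :=
      hf.indep.precomp (g := fun p : s => (⟨p.1, hs p.1 p.2⟩ : Nat.Primes)) (by
        intro p q h
        exact Subtype.ext (Subtype.mk.inj h))
    have hc : ∀ p : s, Continuous fun z : ℂ =>
        z ^ k.factorization p * (starRingEnd ℂ z) ^ l.factorization p := by
      intro p; fun_prop
    rw [hi.integral_fun_prod_comp (fun p => (hf.meas p).aemeasurable)
      (fun p => (hc p).aestronglyMeasurable)]
    have h2 : ∃ p, k.factorization p ≠ l.factorization p := by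
      by_contra! hcon
      exact h (Nat.factorization_inj (by simp; omega) (by simp; omega) (Finsupp.ext hcon))
    obtain ⟨p, hp⟩ := h2
    have hps : p ∈ s := by
      by_contra hcon
      simp only [s, Finset.mem_union, not_or, ← Nat.support_factorization,
        Finsupp.notMem_support_iff] at hcon
      exact hp (hcon.1.trans hcon.2.symm)
    exact Finset.prod_eq_zero (Finset.mem_univ (⟨p, hps⟩ : s))
      (prime_moment μ f hf p (hs p hps) _ _ hp)

theorem parseval {Ω : Type*} [MeasurableSpace Ω] (μ : Measure Ω) [IsProbabilityMeasure μ]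
    (f : Ω → ℕ → ℂ) (hf : IsSteinhausRMF μ f) (T : Finset ℕ) (hT : ∀ k ∈ T, 1 ≤ k) (b : ℕ → ℂ) :
    ∫ ω, ‖∑ k ∈ T, b k * f ω k‖ ^ 2 ∂μ = ∑ k ∈ T, ‖b k‖ ^ 2 := by
  apply Complex.ofReal_injective
  rw [← integral_complex_ofReal]
  have h1 : ∀ ω, ((‖∑ k ∈ T, b k * f ω k‖ ^ 2 : ℝ) : ℂ) =
      ∑ k ∈ T, ∑ l ∈ T, (b k * starRingEnd ℂ (b l)) * (f ω k * starRingEnd ℂ (f ω l)) := by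
    intro ω
    rw [← Complex.normSq_eq_norm_sq, ← Complex.mul_conj, map_sum, Finset.sum_mul_sum]
    refine Finset.sum_congr rfl fun k _ => Finset.sum_congr rfl fun l _ => ?_
    rw [map_mul]; ring
  have hint : ∀ k ∈ T, ∀ l ∈ T, Integrable (fun ω =>
      (b k * starRingEnd ℂ (b l)) * (f ω k * starRingEnd ℂ (f ω l))) μ := by
    intro k hk l hl
    refine Integrable.const_mul ?_ _
    have hmeas : Measurable fun ω => f ω k * starRingEnd ℂ (f ω l) :=
      (hf.meas k).mul (Complex.continuous_conj.measurable.comp (hf.meas l))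
    refine Integrable.of_bound hmeas.aestronglyMeasurable 1 ?_
    filter_upwards [ae_norm μ f hf] with ω hω
    simp [hω k (hT k hk), hω l (hT l hl)]
  simp_rw [h1]
  rw [integral_finsetSum _ fun k hk => integrable_finsetSum _ fun l hl => hint k hk l hl]
  push_cast
  refine Finset.sum_congr rfl fun k hk => ?_
  rw [integral_finsetSum _ fun l hl => hint k hk l hl]
  have h2 : ∀ l ∈ T, ∫ ω, (b k * starRingEnd ℂ (b l)) * (f ω k * starRingEnd ℂ (f ω l)) ∂μ =
      if k = l then (b k * starRingEnd ℂ (b l)) else 0 := by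
    intro l hl
    rw [integral_const_mul, ortho μ f hf k l (hT k hk) (hT l hl)]
    split_ifs <;> simp
  rw [Finset.sum_congr rfl h2, Finset.sum_ite_eq, if_pos hk, Complex.mul_conj,
    Complex.normSq_eq_norm_sq]
  push_cast; rfl

/-- Hypercontractive inequality, Steinhaus case:
`E[|∑_{n ≥ 1} aₙ f(n)|^{2m}] ≤ (∑_{n ≥ 1} |aₙ|² d_{2m-1}(n))^m`
for finitely supported sequences `(aₙ)_{n ≥ 1}` of complex numbers. -/
theorem hypercontractive_steinhaus
    {Ω : Type*} [MeasurableSpace Ω] (μ : Measure Ω) [IsProbabilityMeasure μ]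
    (f : Ω → ℕ → ℂ) (hf : IsSteinhausRMF μ f)
    (a : ℕ → ℂ) (N : ℕ) (m : ℕ) (hm : 1 ≤ m) :
    ∫ ω, ‖∑ n ∈ Finset.Icc 1 N, a n * f ω n‖ ^ (2 * m) ∂μ ≤
      (∑ n ∈ Finset.Icc 1 N, ‖a n‖ ^ 2 * (dFold (2 * m - 1) n : ℝ)) ^ m := by
  let S : Finset (Fin m → ℕ) := Fintype.piFinset fun _ => Finset.Icc 1 N
  let T : Finset ℕ := S.image fun v => ∏ i, v i
  have hS : ∀ v ∈ S, ∀ i, 1 ≤ v i := fun v hv i =>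
    (Finset.mem_Icc.mp (Fintype.mem_piFinset.mp hv i)).1
  have hST : ∀ v ∈ S, ∏ i, v i ∈ T := fun v hv => Finset.mem_image_of_mem _ hv
  have hT : ∀ k ∈ T, 1 ≤ k := by
    intro k hk
    obtain ⟨v, hv, rfl⟩ := Finset.mem_image.mp hk
    exact Finset.one_le_prod' fun i _ => hS v hv i
  have h1 : ∀ ω, ‖∑ n ∈ Finset.Icc 1 N, a n * f ω n‖ ^ (2 * m) =
      ‖∑ k ∈ T, (∑ v ∈ S with ∏ i, v i = k, ∏ i, a (v i)) * f ω k‖ ^ 2 := by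
    intro ω
    rw [mul_comm 2 m, pow_mul, ← norm_pow, Finset.sum_pow']
    congr 2
    rw [← Finset.sum_fiberwise_of_maps_to hST]
    refine Finset.sum_congr rfl fun k _ => ?_
    rw [Finset.sum_mul]
    refine Finset.sum_congr rfl fun v hv => ?_
    obtain ⟨hvS, rfl⟩ := Finset.mem_filter.mp hv
    rw [Finset.prod_mul_distrib, f_prod μ f hf ω _ v fun i _ => hS v hvS i]
  simp_rw [h1]
  rw [parseval μ f hf T hT]
  refine (combin m N a T hT S rfl hST).trans ?_
  gcongr with n hn
  exact dFold_mono _ _ _ (Finset.mem_Icc.mp hn).1 (by omega)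
end
end

section
/- (Parseval's identity for Dirichlet series.) Let (a_n)_{n ≥ 1} be a sequence of complex numbers, let A(s) := ∑_{n ≥ 1} a_n n^{−s} denote the corresponding Dirichlet series, and let σ_c be its abscissa of convergence. Then for any σ > max{0, σ_c}, ∫_0^{+∞} |∑_{n ≤ x} a_n|² x^{−1−2σ} dx = (1/(2π)) ∫_{−∞}^{+∞} |A(σ+it)/(σ+it)|² dt. -/
open Filter

noncomputable section

open MeasureTheory FourierTransform in
lemma pds_plancherel (f : ℝ → ℂ) (h1 : Integrable f) (h2 : MemLp f 2) :
    ∫ x, ‖𝓕 f x‖ ^ 2 = ∫ x, ‖f x‖ ^ 2 := by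
  set F : Lp ℂ 2 (volume : Measure ℝ) := h2.toLp f with hF
  have hFf : F =ᵐ[volume] f := h2.coeFn_toLp
  set G : Lp ℂ 2 (volume : Measure ℝ) := 𝓕 F with hG
  have hcont : Continuous (𝓕 f) :=
    VectorFourier.fourierIntegral_continuous Real.continuous_fourierChar
      (L := innerₗ ℝ) (μ := volume) continuous_inner h1
  have key : ∀ᵐ x, G x = 𝓕 f x := by
    apply ae_eq_of_integral_contDiff_smul_eq
    · exact (Lp.memLp G).locallyIntegrable (by norm_num)
    · exact hcont.locallyIntegrable
    · intro g hg hgs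
      have hs : HasCompactSupport (fun x => (g x : ℂ)) :=
        hgs.comp_left (g := fun y : ℝ => (y : ℂ)) (by simp)
      let φ : SchwartzMap ℝ ℂ := hs.toSchwartzMap
        (Complex.ofRealCLM.contDiff.comp hg)
      have hφ : ∀ x, φ x = (g x : ℂ) := fun x => rfl
      have e := congrArg (fun T => T φ) (Lp.fourier_toTemperedDistribution_eq F)
      simp only [TemperedDistribution.fourier_apply, Lp.toTemperedDistribution_apply] at e
      have e2 : ∫ x, (𝓕 φ) x • F x = ∫ x, (𝓕 φ) x • f x := by
        apply integral_congr_ae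
        filter_upwards [hFf] with x hx
        rw [hx]
      have e3 : ∫ x, (𝓕 (φ : ℝ → ℂ)) x • f x = ∫ x, φ x • 𝓕 f x := by
        have := VectorFourier.integral_fourierIntegral_smul_eq_flip (L := innerₗ ℝ)
          (μ := volume) (ν := volume) (f := (φ : ℝ → ℂ)) (g := f)
          Real.continuous_fourierChar continuous_inner φ.integrable h1
        rw [flip_innerₗ] at this
        exact this
      rw [e2] at e
      calc ∫ x, g x • G x = ∫ x, φ x • G x := by simp [hφ]
        _ = ∫ x, (𝓕 φ) x • f x := e.symm
        _ = ∫ x, φ x • 𝓕 f x := by rw [← e3, SchwartzMap.fourier_coe]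
        _ = ∫ x, g x • 𝓕 f x := by simp [hφ]
  have n1 : ∀ H : Lp ℂ 2 (volume : Measure ℝ), ‖H‖ ^ 2 = ∫ x, ‖H x‖ ^ 2 := by
    intro H
    have := L2.inner_def (𝕜 := ℂ) H H
    rw [inner_self_eq_norm_sq_to_K] at this
    have h3 : ∀ x, inner ℂ (H x) (H x) = ((‖H x‖ ^ 2 : ℝ) : ℂ) := by
      intro x; rw [inner_self_eq_norm_sq_to_K]; simp
    simp only [h3] at this
    have h4 : ∫ x, (((‖H x‖ ^ 2 : ℝ)) : ℂ) = ((∫ x, ‖H x‖ ^ 2 : ℝ) : ℂ) := integral_ofReal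
    have h5 := this.trans h4
    apply Complex.ofReal_injective
    rw [← h5]
    simp
  have n2 : ‖G‖ = ‖F‖ := Lp.norm_fourier_eq F
  calc ∫ x, ‖𝓕 f x‖ ^ 2 = ∫ x, ‖G x‖ ^ 2 := by
        apply integral_congr_ae; filter_upwards [key] with x hx; rw [hx]
    _ = ∫ x, ‖F x‖ ^ 2 := by rw [← n1, ← n1, n2]
    _ = _ := by apply integral_congr_ae; filter_upwards [hFf] with x hx; rw [hx]

lemma pds_bound (a : ℕ → ℂ) (r : ℝ) (hr : 0 < r) (L : ℂ)
    (h : Tendsto (fun N : ℕ => ∑ n ∈ Finset.Icc 1 N, a n / (n : ℂ) ^ (r : ℂ)) atTop (nhds L)) :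
    ∃ C : ℝ, 0 ≤ C ∧ ∀ N : ℕ, ‖∑ n ∈ Finset.Icc 1 N, a n‖ ≤ C * (N : ℝ) ^ r := by
  obtain ⟨M, hM⟩ := h.norm.bddAbove_range
  set B : ℕ → ℂ := fun N : ℕ => ∑ n ∈ Finset.Icc 1 N, a n / (n : ℂ) ^ (r : ℂ) with hB
  have hBM : ∀ N, ‖B N‖ ≤ M := fun N => hM ⟨N, rfl⟩
  have hM0 : 0 ≤ M := (norm_nonneg _).trans (hBM 0)
  have hD : ∀ N : ℕ, ‖∑ n ∈ Finset.Icc 1 N, a n - B N * ((N : ℝ) ^ r : ℝ)‖ ≤ M * (N : ℝ) ^ r := by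
    intro N
    induction N with
    | zero => simp [hB, Real.zero_rpow hr.ne']
    | succ N ih =>
      have hne : (((N + 1 : ℕ) : ℝ) ^ r : ℝ) ≠ 0 := by positivity
      have hpow : ((N + 1 : ℕ) : ℂ) ^ (r : ℂ) = ((((N + 1 : ℕ) : ℝ) ^ r : ℝ) : ℂ) := by
        rw [Complex.ofReal_cpow (by positivity)]; simp
      have hBs : B (N + 1) = B N + a (N + 1) / ((((N + 1 : ℕ) : ℝ) ^ r : ℝ) : ℂ) := by
        simp only [hB]
        rw [Finset.sum_Icc_succ_top (by omega), hpow]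
      have hne' : ((((N + 1 : ℕ) : ℝ) ^ r : ℝ) : ℂ) ≠ 0 := by exact_mod_cast hne
      have hmono : (N : ℝ) ^ r ≤ ((N + 1 : ℕ) : ℝ) ^ r :=
        Real.rpow_le_rpow (by positivity) (by push_cast; linarith) hr.le
      have e : ∑ n ∈ Finset.Icc 1 (N + 1), a n - B (N + 1) * (((N + 1 : ℕ) : ℝ) ^ r : ℝ)
          = (∑ n ∈ Finset.Icc 1 N, a n - B N * ((N : ℝ) ^ r : ℝ))
            - B N * (((((N + 1 : ℕ) : ℝ) ^ r - (N : ℝ) ^ r : ℝ)) : ℂ) := by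
        rw [Finset.sum_Icc_succ_top (by omega), hBs, Complex.ofReal_sub, add_mul,
          div_mul_cancel₀ _ hne']
        ring
      rw [e]
      refine (norm_sub_le _ _).trans ?_
      rw [norm_mul, Complex.norm_real, Real.norm_of_nonneg (by linarith)]
      have := mul_le_mul_of_nonneg_right (hBM N)
        (show 0 ≤ ((N + 1 : ℕ) : ℝ) ^ r - (N : ℝ) ^ r by linarith)
      linarith
  refine ⟨2 * M, by linarith, fun N => ?_⟩
  have h1 := hD N
  have h2 : ‖B N * ((N : ℝ) ^ r : ℝ)‖ ≤ M * (N : ℝ) ^ r := by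
    rw [norm_mul, Complex.norm_real, Real.norm_of_nonneg (by positivity)]
    exact mul_le_mul_of_nonneg_right (hBM N) (by positivity)
  have h3 := norm_add_le (∑ n ∈ Finset.Icc 1 N, a n - B N * ((N : ℝ) ^ r : ℝ))
    (B N * ((N : ℝ) ^ r : ℝ))
  rw [sub_add_cancel] at h3
  linarith

open MeasureTheory Asymptotics Complex in
lemma pds_abel (a : ℕ → ℂ) (r : ℝ) (hr : 0 < r) (C : ℝ)
    (hC : ∀ N : ℕ, ‖∑ n ∈ Finset.Icc 1 N, a n‖ ≤ C * (N : ℝ) ^ r) (s : ℂ) (hs : r < s.re) :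
    Tendsto (fun N : ℕ => ∑ n ∈ Finset.Icc 1 N, a n / (n : ℂ) ^ s) atTop
      (nhds (s * mellin (fun x : ℝ => ∑ n ∈ Finset.Icc 1 ⌊x⌋₊, a n) (-s))) := by
  have hs0 : s ≠ 0 := by rintro rfl; simp at hs; linarith
  set f : ℕ → ℂ := fun n => if n = 0 then 0 else a n with hf
  have hf0 : f 0 = 0 := by simp [hf]
  have h₁ : (-s - 1).re + r < -1 := by simp; linarith
  have h₃ (t : ℝ) (ht : t ∈ Set.Ici (1 : ℝ)) :
      DifferentiableAt ℝ (fun x : ℝ ↦ (x : ℂ) ^ (-s)) t :=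
    differentiableAt_id.ofReal_cpow_const (zero_lt_one.trans_le ht).ne' (neg_ne_zero.mpr hs0)
  have h₄ : ∀ n, ∑ k ∈ Finset.Icc 0 n, f k = ∑ k ∈ Finset.Icc 1 n, a k := by
    intro n
    rw [← Finset.insert_Icc_add_one_left_eq_Icc n.zero_le, Finset.sum_insert (by simp), hf0,
      zero_add, zero_add]
    refine Finset.sum_congr rfl fun k hk => ?_
    have := (Finset.mem_Icc.mp hk).1
    simp [hf, show k ≠ 0 by omega]
  have h₅ : ∀ n : ℕ, ∑ k ∈ Finset.Icc 0 n, (((k : ℝ) : ℂ) ^ (-s)) * f k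
      = ∑ k ∈ Finset.Icc 1 n, a k / (k : ℂ) ^ s := by
    intro n
    rw [← Finset.insert_Icc_add_one_left_eq_Icc n.zero_le, Finset.sum_insert (by simp), hf0,
      mul_zero, zero_add, zero_add]
    refine Finset.sum_congr rfl fun k hk => ?_
    have := (Finset.mem_Icc.mp hk).1
    simp [hf, show k ≠ 0 by omega, cpow_neg, div_eq_mul_inv, mul_comm]
  have hO : (fun n ↦ ∑ k ∈ Finset.Icc 0 n, f k) =O[atTop] fun n ↦ (n : ℝ) ^ r := by
    refine IsBigO.of_bound C (Eventually.of_forall fun n => ?_)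
    rw [h₄, Real.norm_of_nonneg (by positivity)]
    exact hC n
  have main := tendsto_sum_mul_atTop_nhds_one_sub_integral₀ (𝕜 := ℂ) (c := f)
    (f := fun x : ℝ ↦ (x : ℂ) ^ (-s)) (l := 0) (g := fun t : ℝ => t ^ ((-s - 1).re + r))
    hf0 h₃ ?_ ?_ ?_ (integrableAtFilter_rpow_atTop_iff.mpr h₁)
  · simp only [h₅] at main
    convert main using 2
    rw [zero_sub, ← integral_neg, mellin, ← integral_const_mul]
    rw [setIntegral_eq_of_subset_of_forall_sdiff_eq_zero (s := Set.Ici (1 : ℝ)) measurableSet_Ioi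
      (fun x (hx : 1 ≤ x) => lt_of_lt_of_le zero_lt_one hx)]
    · rw [← integral_Ici_eq_integral_Ioi]
      refine setIntegral_congr_fun measurableSet_Ici fun t ht ↦ ?_
      have ht : (1:ℝ) ≤ t := ht
      beta_reduce
      rw [deriv_ofReal_cpow_const (by linarith), h₄, smul_eq_mul]
      · ring
      · exact neg_ne_zero.mpr hs0
    · rintro x ⟨_, hx⟩
      have : ⌊x⌋₊ = 0 := Nat.floor_eq_zero.mpr (not_le.mp hx)
      simp [this]
  · refine (Iff.mpr integrableOn_Ici_iff_integrableOn_Ioi <|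
      integrableOn_Ioi_deriv_ofReal_cpow zero_lt_one
        (by simpa using! hr.trans hs)).locallyIntegrableOn
  · have hlim : Tendsto (fun n : ℕ ↦ (n : ℝ) ^ (-(s.re - r))) atTop (nhds 0) :=
      (tendsto_rpow_neg_atTop (by rwa [sub_pos])).comp tendsto_natCast_atTop_atTop
    refine (IsBigO.mul_atTop_rpow_natCast_of_isBigO_rpow (-s.re) _ _ ?_ hO ?_).trans_tendsto hlim
    · exact isBigO_norm_left.mp <| (norm_ofReal_cpow_eventually_eq_atTop _).isBigO.natCast_atTop
    · linarith
  · refine .mul_atTop_rpow_of_isBigO_rpow (-(s + 1).re) r _ ?_ ?_ (by rw [← neg_re, neg_add'])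
    · simpa [-neg_add_rev, neg_add'] using! isBigO_deriv_ofReal_cpow_const_atTop _
    · exact (hO.comp_tendsto tendsto_nat_floor_atTop).trans <|
        isEquivalent_nat_floor.isBigO.rpow hr.le (eventually_ge_atTop 0)


open MeasureTheory FourierTransform in
lemma pds_main (S : ℝ → ℂ) (hS : Measurable S) (r C σ : ℝ) (hrσ : r < σ)
    (hS0 : ∀ x < 1, S x = 0) (hC : ∀ x, 1 ≤ x → ‖S x‖ ≤ C * x ^ r) :
    (∫ x in Set.Ioi (0 : ℝ), ‖S x‖ ^ 2 / x ^ (1 + 2 * σ)) =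
      (1 / (2 * Real.pi)) * ∫ t : ℝ,
        ‖mellin S (-((σ : ℂ) + (t : ℂ) * Complex.I))‖ ^ 2 := by
  set g : ℝ → ℂ := fun u => Real.exp (σ * u) • S (Real.exp (-u)) with hg
  have hgm : Measurable g := by
    refine Measurable.smul (f := fun u : ℝ => Real.exp (σ * u)) (g := fun u => S (Real.exp (-u))) ?_ ?_
    · fun_prop
    · exact hS.comp (by fun_prop)
  have hb : ∀ u, ‖g u‖ ≤ (Set.Iic (0:ℝ)).indicator (fun u => C * Real.exp ((σ - r) * u)) u := by
    intro u
    by_cases hu : u ≤ 0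
    · rw [Set.indicator_of_mem (show u ∈ Set.Iic (0:ℝ) from hu)]
      have h1 := hC (Real.exp (-u)) (by rw [Real.one_le_exp_iff]; linarith)
      rw [hg]
      simp only [norm_smul, Real.norm_eq_abs, Real.abs_exp]
      rw [← Real.exp_mul] at h1
      have h2 := mul_le_mul_of_nonneg_left h1 (Real.exp_pos (σ * u)).le
      refine h2.trans (le_of_eq ?_)
      rw [show (σ - r) * u = σ * u + -u * r by ring, Real.exp_add]
      ring
    · have : S (Real.exp (-u)) = 0 := hS0 _ (by rw [Real.exp_lt_one_iff]; linarith)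
      simp [hg, this, hu]
  have h1 : Integrable g := by
    refine Integrable.mono' (g := (Set.Iic (0:ℝ)).indicator
      (fun u => C * Real.exp ((σ - r) * u))) ?_ hgm.aestronglyMeasurable (Eventually.of_forall hb)
    rw [integrable_indicator_iff measurableSet_Iic]
    exact (integrableOn_exp_mul_Iic (by linarith) 0).const_mul C
  have h2 : MemLp g 2 := by
    rw [memLp_two_iff_integrable_sq_norm hgm.aestronglyMeasurable]
    refine Integrable.mono' (g := (Set.Iic (0:ℝ)).indicator
      (fun u => C ^ 2 * Real.exp ((2 * (σ - r)) * u))) ?_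
      (hgm.norm.pow_const 2).aestronglyMeasurable (Eventually.of_forall fun u => ?_)
    · rw [integrable_indicator_iff measurableSet_Iic]
      exact (integrableOn_exp_mul_Iic (by linarith) 0).const_mul _
    · rw [Real.norm_of_nonneg (by positivity)]
      refine (pow_le_pow_left₀ (norm_nonneg _) (hb u) 2).trans (le_of_eq ?_)
      by_cases hu : u ≤ 0
      · rw [Set.indicator_of_mem (show u ∈ Set.Iic (0:ℝ) from hu),
          Set.indicator_of_mem (show u ∈ Set.Iic (0:ℝ) from hu), mul_pow, ← Real.exp_nat_mul]
        push_cast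
        ring_nf
      · simp [hu]
  have hP := pds_plancherel g h1 h2
  have hm : ∀ t : ℝ, mellin S (-((σ : ℂ) + (t : ℂ) * Complex.I)) = 𝓕 g (t * (-(2 * Real.pi)⁻¹)) := by
    intro t
    rw [mellin_eq_fourier]
    have e1 : (-((σ : ℂ) + (t : ℂ) * Complex.I)).re = -σ := by simp
    have e2 : (-((σ : ℂ) + (t : ℂ) * Complex.I)).im = -t := by simp
    rw [e1, e2, neg_neg, hg, div_eq_mul_inv, neg_mul_comm]
  have hL : (∫ x in Set.Ioi (0 : ℝ), ‖S x‖ ^ 2 / x ^ (1 + 2 * σ)) = ∫ u, ‖g u‖ ^ 2 := by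
    have him : (fun u : ℝ => Real.exp (-u)) '' Set.univ = Set.Ioi 0 := by
      ext y
      simp only [Set.image_univ, Set.mem_range, Set.mem_Ioi]
      constructor
      · rintro ⟨u, rfl⟩; positivity
      · intro hy; exact ⟨-Real.log y, by simp [Real.exp_log hy]⟩
    rw [← him, integral_image_eq_integral_abs_deriv_smul (f' := fun u => -Real.exp (-u))
      MeasurableSet.univ]
    · rw [Measure.restrict_univ]
      refine integral_congr_ae (Eventually.of_forall fun u => ?_)
      simp only [abs_neg, Real.abs_exp, smul_eq_mul, hg, norm_smul, Real.norm_eq_abs, mul_pow]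
      rw [← Real.exp_mul, ← Real.exp_nat_mul, div_eq_mul_inv, ← Real.exp_neg, mul_left_comm,
        ← Real.exp_add, mul_comm]
      congr 2
      push_cast
      ring
    · intro u _
      have := ((Real.hasDerivAt_exp (-u)).comp u (hasDerivAt_neg u)).hasDerivWithinAt
        (s := Set.univ)
      simpa using! this
    · intro u _ v _ h
      simpa using h
  rw [hL, ← hP]
  simp only [hm]
  rw [Measure.integral_comp_mul_right (fun ξ => ‖𝓕 g ξ‖ ^ 2) (-(2 * Real.pi)⁻¹)]
  have hpi := Real.pi_pos
  rw [inv_neg, inv_inv, abs_neg, abs_of_pos (by positivity), smul_eq_mul, ← mul_assoc,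
    one_div, inv_mul_cancel₀ (by positivity), one_mul]

/-- Parseval's identity for Dirichlet series: if `σ > max{0, σ_c}`, where `σ_c` is the
abscissa of convergence of `A(s) = ∑_{n ≥ 1} aₙ n^{-s}`, then
`∫_0^∞ |∑_{n ≤ x} aₙ|² x^{-1-2σ} dx = (1/(2π)) ∫_ℝ |A(σ+it)/(σ+it)|² dt`. -/
theorem parseval_dirichlet_series (a : ℕ → ℂ) (σ : ℝ) (hσ : 0 < σ)
    (hconv : ∃ σ' : ℝ, σ' < σ ∧ ∀ s : ℂ, σ' < s.re →
      ∃ L : ℂ, Tendsto (fun N : ℕ => ∑ n ∈ Finset.Icc 1 N, a n / (n : ℂ) ^ s) atTop (nhds L)) :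
    (∫ x in Set.Ioi (0 : ℝ), ‖∑ n ∈ Finset.Icc 1 ⌊x⌋₊, a n‖ ^ 2 / x ^ (1 + 2 * σ)) =
      (1 / (2 * Real.pi)) * ∫ t : ℝ,
        ‖(limUnder atTop fun N : ℕ =>
            ∑ n ∈ Finset.Icc 1 N, a n / (n : ℂ) ^ ((σ : ℂ) + (t : ℂ) * Complex.I)) /
          ((σ : ℂ) + (t : ℂ) * Complex.I)‖ ^ 2 := by
  obtain ⟨σ', hσ', hc⟩ := hconv
  obtain ⟨r, hr1, hr2⟩ := exists_between (max_lt hσ hσ')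
  have hr : 0 < r := (le_max_left _ _).trans_lt hr1
  obtain ⟨L, hL⟩ := hc (r : ℂ) (by simpa using (le_max_right _ _).trans_lt hr1)
  obtain ⟨C, hC0, hC⟩ := pds_bound a r hr L hL
  have key := pds_main (fun x : ℝ => ∑ n ∈ Finset.Icc 1 ⌊x⌋₊, a n)
    ((measurable_from_nat (f := fun N : ℕ => ∑ n ∈ Finset.Icc 1 N, a n)).comp
      Nat.measurable_floor) r C σ hr2
    (fun x hx => by simp [Nat.floor_eq_zero.mpr hx])
    (fun x hx => (hC _).trans (mul_le_mul_of_nonneg_left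
      (Real.rpow_le_rpow (by positivity) (Nat.floor_le (by linarith)) hr.le) hC0))
  rw [key]
  congr 2
  ext t
  have hs : ((σ : ℂ) + (t : ℂ) * Complex.I).re = σ := by simp
  have hs0 : (σ : ℂ) + (t : ℂ) * Complex.I ≠ 0 := by
    intro h
    rw [h] at hs
    simp at hs
    linarith
  rw [(pds_abel a r hr C hC ((σ : ℂ) + (t : ℂ) * Complex.I) (by rw [hs]; exact hr2)).limUnder_eq,
    mul_div_cancel_left₀ _ hs0]
end
end

section
/- (Euler product result, Steinhaus case.) Let f be a Steinhaus random multiplicative function. For any real number t and any real numbers 2 ≤ x ≤ y, one has E[∏_{x < p ≤ y, p prime} |1 − f(p)·p^{−1/2−it}|^{−2}] = ∏_{x < p ≤ y, p prime} (1 − 1/p)^{−1}. -/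
open MeasureTheory ProbabilityTheory Real

noncomputable section

/-- Mean of `|1 - z a|⁻²` over the unit circle. -/
lemma circle_mean_aux (a : ℂ) (ha : ‖a‖ < 1) :
    ∫ θ in Set.Ioc (0 : ℝ) 1, (‖1 - Complex.exp (2 * π * θ * Complex.I) * a‖ ^ 2)⁻¹ =
      (1 - ‖a‖ ^ 2)⁻¹ := by
  have hpos : 0 < 1 - ‖a‖ ^ 2 := by nlinarith [norm_nonneg a]
  have hw : (starRingEnd ℂ) a ∈ Metric.ball (0 : ℂ) 1 := by simpa using ha
  have key := DiffContOnCl.circleAverage_poissonKernel_smul' (f := fun _ : ℂ => (1 : ℂ))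
    (R := 1) (c := 0) (diffContOnCl_const) hw
  rw [Real.circleAverage_def, intervalIntegral.integral_smul_const] at key
  have hfun : ∀ θ : ℝ,
      ((‖circleMap 0 1 θ - 0‖ ^ 2 - ‖(starRingEnd ℂ) a - 0‖ ^ 2) /
        ‖circleMap 0 1 θ - 0 - ((starRingEnd ℂ) a - 0)‖ ^ 2) =
      (1 - ‖a‖ ^ 2) * (‖1 - Complex.exp (θ * Complex.I) * a‖ ^ 2)⁻¹ := by
    intro θ
    have h1 : circleMap 0 1 θ = Complex.exp (θ * Complex.I) := by simp [circleMap]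
    have h2 : ‖Complex.exp (θ * Complex.I)‖ = 1 := Complex.norm_exp_ofReal_mul_I θ
    rw [h1]
    set z := Complex.exp (θ * Complex.I)
    have h3 : ‖z - (starRingEnd ℂ) a‖ = ‖1 - z * a‖ := by
      have hz : z * (starRingEnd ℂ) z = 1 := by
        rw [Complex.mul_conj, Complex.normSq_eq_norm_sq, h2]; simp
      have : z - (starRingEnd ℂ) a = z * (starRingEnd ℂ) (1 - z * a) := by
        simp only [map_sub, map_one, map_mul]
        linear_combination (starRingEnd ℂ) a * hz
      rw [this, norm_mul, h2, one_mul, Complex.norm_conj]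
    simp only [sub_zero, h2, h3, Complex.norm_conj]
    rw [div_eq_mul_inv]; norm_num
  simp_rw [hfun] at key
  rw [intervalIntegral.integral_const_mul] at key
  have h4 := intervalIntegral.integral_comp_mul_left (a := 0) (b := 1)
    (fun θ : ℝ => (‖1 - Complex.exp (θ * Complex.I) * a‖ ^ 2)⁻¹) (c := 2 * π) (by positivity)
  rw [mul_zero, mul_one, intervalIntegral.integral_of_le zero_le_one] at h4
  push_cast at h4
  rw [h4]
  set J := ∫ θ in (0 : ℝ)..2 * π, (‖1 - Complex.exp (θ * Complex.I) * a‖ ^ 2)⁻¹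
  rw [smul_smul, Complex.real_smul, mul_one] at key
  have key' : (2 * π)⁻¹ * ((1 - ‖a‖ ^ 2) * J) = 1 := by exact_mod_cast key
  rw [smul_eq_mul]
  apply eq_inv_of_mul_eq_one_left
  linarith

/-- Euler product result, Steinhaus case:
`E[∏_{x < p ≤ y} |1 - f(p) p^{-1/2-it}|⁻²] = ∏_{x < p ≤ y} (1 - 1/p)⁻¹`. -/
theorem euler_product_steinhaus
    {Ω : Type*} [MeasurableSpace Ω] (μ : Measure Ω) [IsProbabilityMeasure μ]
    (f : Ω → ℕ → ℂ) (hf : IsSteinhausRMF μ f)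
    (t : ℝ) (x y : ℝ) (hx : 2 ≤ x) (hxy : x ≤ y) :
    ∫ ω, ∏ p ∈ (Finset.Icc 1 ⌊y⌋₊).filter (fun p : ℕ => Nat.Prime p ∧ x < (p : ℝ)),
        (‖1 - f ω p * (p : ℂ) ^ (-(1 / 2 : ℂ) - (t : ℂ) * Complex.I)‖ ^ 2)⁻¹ ∂μ =
      ∏ p ∈ (Finset.Icc 1 ⌊y⌋₊).filter (fun p : ℕ => Nat.Prime p ∧ x < (p : ℝ)),
        (1 - 1 / (p : ℝ))⁻¹ := by
  set S := (Finset.Icc 1 ⌊y⌋₊).filter (fun p : ℕ => Nat.Prime p ∧ x < (p : ℝ)) with hS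
  have hprime : ∀ p : S, Nat.Prime (p : ℕ) := fun p => (Finset.mem_filter.1 p.2).2.1
  let c : ℕ → ℂ := fun p => (p : ℂ) ^ (-(1 / 2 : ℂ) - (t : ℂ) * Complex.I)
  let g : ℕ → ℂ → ℝ := fun p z => (‖1 - z * c p‖ ^ 2)⁻¹
  have hg : ∀ p, Measurable (g p) := fun p => by
    simp only [g]; fun_prop
  have hind : iIndepFun (fun (p : S) (ω : Ω) => f ω (p : ℕ)) μ :=
    hf.indep.precomp (g := fun p : S => (⟨(p : ℕ), hprime p⟩ : Nat.Primes))
      (fun p q h => Subtype.ext (congrArg (fun r : Nat.Primes => (r : ℕ)) h))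
  have hprod := hind.integral_fun_prod_comp (f := fun p : S => g p)
    (fun p => (hf.meas p).aemeasurable) (fun p => (hg p).aestronglyMeasurable)
  have hL : ∀ ω, ∏ p ∈ S, (‖1 - f ω p * (p : ℂ) ^ (-(1 / 2 : ℂ) - (t : ℂ) * Complex.I)‖ ^ 2)⁻¹
      = ∏ p : S, g p (f ω p) := fun ω =>
    (Finset.prod_coe_sort S (fun p => g p (f ω p))).symm
  simp_rw [hL]
  rw [hprod, ← Finset.prod_coe_sort S (fun p : ℕ => (1 - 1 / (p : ℝ))⁻¹)]
  refine Finset.prod_congr rfl fun p _ => ?_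
  have hp := hprime p
  have hp0 : (0 : ℝ) < ((p : ℕ) : ℝ) := by exact_mod_cast hp.pos
  have hp1 : (1 : ℝ) < ((p : ℕ) : ℝ) := by exact_mod_cast hp.one_lt
  have hc : ‖c p‖ ^ 2 = 1 / ((p : ℕ) : ℝ) := by
    have : ‖c p‖ = ((p : ℕ) : ℝ) ^ (-(1 / 2 : ℝ)) := by
      simp only [c]
      rw [Complex.norm_natCast_cpow_of_pos hp.pos]
      congr 1
      simp
    rw [this, ← Real.rpow_natCast, ← Real.rpow_mul hp0.le]
    norm_num [Real.rpow_neg_one]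
  have hc1 : ‖c p‖ < 1 := by
    have : 1 / ((p : ℕ) : ℝ) < 1 := by rw [div_lt_one hp0]; exact hp1
    nlinarith [norm_nonneg (c p)]
  rw [← integral_map (φ := fun ω => f ω p) (f := g p) (hf.meas p).aemeasurable
    (hg p).aestronglyMeasurable, hf.unif p hp,
    integral_map (by fun_prop) (hg p).aestronglyMeasurable, ← hc]
  exact circle_mean_aux (c p) hc1
end
end

section
/- Let f be a Rademacher random multiplicative function and suppose 0 < ε < 1/4. For ℓ ≥ 2 define the event C_ℓ := { sup over indices i with X_{ℓ−1} < x_{i−1} ≤ X_ℓ of (1/(√(x_{i−1})·R(x_{i−1}))) · sup_{x_{i−1} < x ≤ x_i} |∑_{n ≤ x_{i−1}, √(x_{i−1}) < P(n) ≤ √x} f(n)| > 2 }. There exists a constant C = C(ε) > 0 such that for all sufficiently large ℓ (in terms of ε), ℙ(C_ℓ) ≤ C · 2^{−(ℓ−1)^K · (1−4ε)/ε}. -/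
open MeasureTheory ProbabilityTheory

noncomputable section

/-- The largest prime factor of `n`, with `P 1 = 1` (and `P 0 = 1`). -/
def Pfac (n : ℕ) : ℕ := if n ≤ 1 then 1 else n.primeFactors.sup id

/-- The test points `x_i := ⌊exp(i^ε)⌋`. -/
def testPoint (ε : ℝ) (i : ℕ) : ℕ := ⌊Real.exp ((i : ℝ) ^ ε)⌋₊

/-- `X_ℓ := exp(2^{ℓ^K})` with `K = 1/(4ε)` (here `ℓ` is a real number). -/
def Xpt (ε ℓ : ℝ) : ℝ := Real.exp ((2 : ℝ) ^ (ℓ ^ (1 / (4 * ε))))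

/-- `R(x) := (log log x)^{1/4+ε}`. -/
def Rbd (ε x : ℝ) : ℝ := Real.log (Real.log x) ^ ((1 : ℝ) / 4 + ε)


lemma four_param {a b c d : ℕ} (ha : 0 < a) (hb : 0 < b) (hc : 0 < c) (hd : 0 < d)
    (h : (a / a.gcd b) * (b / a.gcd b) = (c / c.gcd d) * (d / c.gcd d)) :
    ∃ p q r s h k : ℕ, 0 < p ∧ 0 < q ∧ 0 < r ∧ 0 < s ∧ 0 < h ∧ 0 < k ∧
      a = h * (p * q) ∧ b = h * (r * s) ∧ c = k * (p * r) ∧ d = k * (q * s) := by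
  have e1 := Nat.mul_div_cancel' (Nat.gcd_dvd_left a b)
  have e2 := Nat.mul_div_cancel' (Nat.gcd_dvd_right a b)
  have e3 := Nat.mul_div_cancel' (Nat.gcd_dvd_left c d)
  have e4 := Nat.mul_div_cancel' (Nat.gcd_dvd_right c d)
  generalize a / a.gcd b = u at *
  generalize b / a.gcd b = v at *
  generalize c / c.gcd d = w at *
  generalize d / c.gcd d = z at *
  generalize a.gcd b = g at *
  generalize c.gcd d = k at *
  subst e1 e2 e3 e4
  obtain ⟨p, q, ⟨r, hr⟩, ⟨s, hs⟩, rfl⟩ := exists_dvd_and_dvd_of_dvd_mul (Dvd.intro _ h)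
  subst hr hs
  have hg : 0 < g := by
    rcases Nat.eq_zero_or_pos g with h0 | h0
    · simp [h0] at ha
    · exact h0
  have hk : 0 < k := by
    rcases Nat.eq_zero_or_pos k with h0 | h0
    · simp [h0] at hc
    · exact h0
  have hpq : 0 < p * q := by
    rcases Nat.eq_zero_or_pos (p*q) with h0 | h0
    · simp [h0] at ha
    · exact h0
  have hv : v = r * s := by
    apply Nat.eq_of_mul_eq_mul_left hpq
    rw [h]; ring
  subst hv
  have : p ≠ 0 := by rintro rfl; simp at hpq
  have : q ≠ 0 := by rintro rfl; simp at hpq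
  have : r ≠ 0 := by rintro rfl; simp at hc
  have : s ≠ 0 := by rintro rfl; simp at hd
  refine ⟨p, q, r, s, g, k, ?_⟩
  refine ⟨by omega, by omega, by omega, by omega, hg, hk, rfl, rfl, rfl, rfl⟩

lemma sum_inv_sqrt (n : ℕ) : ∑ s ∈ Finset.Icc 1 n, 1 / Real.sqrt s ≤ 2 * Real.sqrt n := by
  induction n with
  | zero => simp
  | succ n ih =>
    rw [Finset.sum_Icc_succ_top (by omega)]
    have h1 : 0 < Real.sqrt (n+1:ℕ) := Real.sqrt_pos.2 (by positivity)
    have h2 : 0 ≤ Real.sqrt n := Real.sqrt_nonneg _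
    have h3 : Real.sqrt (n+1:ℕ) ^ 2 = n + 1 := by rw [Real.sq_sqrt (by positivity)]; push_cast; ring
    have h4 : Real.sqrt n ^ 2 = n := Real.sq_sqrt (by positivity)
    have : 1 / Real.sqrt (n+1:ℕ) ≤ 2 * Real.sqrt (n+1:ℕ) - 2 * Real.sqrt n := by
      rw [div_le_iff₀ h1]
      nlinarith [sq_nonneg (Real.sqrt (n+1:ℕ) - Real.sqrt n)]
    linarith

/-- the kernel -/
noncomputable def Kk (p s : ℕ) : ℝ := 1 / ((max p s : ℕ) * Real.sqrt (p * s))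

lemma Kk_nonneg (p s : ℕ) : 0 ≤ Kk p s := by unfold Kk; positivity
lemma Kk_symm (p s : ℕ) : Kk p s = Kk s p := by unfold Kk; rw [max_comm, mul_comm (p:ℝ)]

lemma sum_Kk_half (N : ℕ) : ∑ p ∈ Finset.Icc 1 N, ∑ s ∈ Finset.Icc 1 p, Kk p s ≤
    2 * (1 + Real.log N) := by
  have h := harmonic_le_one_add_log N
  rw [harmonic_eq_sum_Icc] at h
  push_cast at h
  calc _ ≤ ∑ p ∈ Finset.Icc 1 N, 2 * ((p:ℝ)⁻¹) := by
        apply Finset.sum_le_sum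
        intro p hp
        have hp0 : 0 < p := (Finset.mem_Icc.1 hp).1
        have hp1 : (0:ℝ) < p := by exact_mod_cast hp0
        have : ∀ s ∈ Finset.Icc 1 p, Kk p s = 1 / (p * Real.sqrt p) * (1 / Real.sqrt s) := by
          intro s hs
          unfold Kk
          rw [max_eq_left (Finset.mem_Icc.1 hs).2, Real.sqrt_mul (by positivity)]
          rw [div_mul_div_comm]; ring
        rw [Finset.sum_congr rfl this, ← Finset.mul_sum]
        have hs := Real.sqrt_pos.2 hp1
        calc _ ≤ 1 / (p * Real.sqrt p) * (2 * Real.sqrt p) := by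
              gcongr; exact sum_inv_sqrt p
          _ = _ := by field_simp
    _ = 2 * ∑ p ∈ Finset.Icc 1 N, ((p:ℝ)⁻¹) := by rw [Finset.mul_sum]
    _ ≤ _ := by linarith

lemma sum_Kk (N : ℕ) : ∑ p ∈ Finset.Icc 1 N, ∑ s ∈ Finset.Icc 1 N, Kk p s ≤
    4 * (1 + Real.log N) := by
  have key : ∑ p ∈ Finset.Icc 1 N, ∑ s ∈ Finset.Icc 1 N, Kk p s ≤
     ∑ p ∈ Finset.Icc 1 N, ∑ s ∈ Finset.Icc 1 N, ((if s ≤ p then Kk p s else 0) + (if p ≤ s then Kk s p else 0)) := by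
    apply Finset.sum_le_sum; intro p _; apply Finset.sum_le_sum; intro s _
    have := Kk_nonneg p s
    have := Kk_nonneg s p
    have := Kk_symm p s
    split_ifs <;> linarith
  have h1 : ∑ p ∈ Finset.Icc 1 N, ∑ s ∈ Finset.Icc 1 N, (if s ≤ p then Kk p s else 0) =
      ∑ p ∈ Finset.Icc 1 N, ∑ s ∈ Finset.Icc 1 p, Kk p s := by
    apply Finset.sum_congr rfl; intro p hp
    rw [← Finset.sum_filter]
    apply Finset.sum_congr _ (fun _ _ => rfl)
    ext s; simp only [Finset.mem_filter, Finset.mem_Icc] at *; omega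
  have h2 := sum_Kk_half N
  simp only [Finset.sum_add_distrib] at key
  rw [Finset.sum_comm (f := fun p s => if p ≤ s then Kk s p else 0)] at key
  linarith

lemma Kk_prod_bound {p q r s : ℕ} (hp : 0 < p) (hq : 0 < q) (hr : 0 < r) (hs : 0 < s) :
    1 / (((max (p*q) (r*s) : ℕ) : ℝ) * (max (p*r) (q*s) : ℕ)) ≤ Kk p s * Kk q r := by
  unfold Kk
  rw [div_mul_div_comm, one_mul]
  set A : ℕ := max (p*q) (r*s) * max (p*r) (q*s) with hA
  have a1 : (p*q)*(p*r) ≤ A := Nat.mul_le_mul (le_max_left _ _) (le_max_left _ _)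
  have a2 : (p*q)*(q*s) ≤ A := Nat.mul_le_mul (le_max_left _ _) (le_max_right _ _)
  have a3 : (r*s)*(p*r) ≤ A := Nat.mul_le_mul (le_max_right _ _) (le_max_left _ _)
  have a4 : (r*s)*(q*s) ≤ A := Nat.mul_le_mul (le_max_right _ _) (le_max_right _ _)
  have b1 : (max p s)^2*(q*r) ≤ A := by
    rcases max_choice p s with h | h <;> rw [h] <;> nlinarith
  have b2 : (max q r)^2*(p*s) ≤ A := by
    rcases max_choice q r with h | h <;> rw [h] <;> nlinarith
  have b3 : ((max p s)^2*(q*r)) * ((max q r)^2*(p*s)) ≤ A * A := Nat.mul_le_mul b1 b2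
  have hAr : ((max (p*q) (r*s) : ℕ) : ℝ) * (max (p*r) (q*s) : ℕ) = (A:ℝ) := by
    rw [hA]; push_cast; ring
  rw [hAr]
  have hp' : (0:ℝ) < p := by exact_mod_cast hp
  have hq' : (0:ℝ) < q := by exact_mod_cast hq
  have hr' : (0:ℝ) < r := by exact_mod_cast hr
  have hs' : (0:ℝ) < s := by exact_mod_cast hs
  have hm1 : (0:ℝ) < (max p s : ℕ) := by exact_mod_cast lt_max_of_lt_left hp
  have hm2 : (0:ℝ) < (max q r : ℕ) := by exact_mod_cast lt_max_of_lt_left hq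
  apply one_div_le_one_div_of_le (by positivity)
  refine le_of_sq_le_sq ?_ (by positivity)
  have e1 : Real.sqrt (p*s) ^ 2 = p * s := Real.sq_sqrt (by positivity)
  have e2 : Real.sqrt (q*r) ^ 2 = q * r := Real.sq_sqrt (by positivity)
  have b4 : (((max p s : ℕ) : ℝ)^2*(q*r)) * (((max q r : ℕ) : ℝ)^2*(p*s)) ≤ A * A := by exact_mod_cast b3
  calc _ = (((max p s : ℕ) : ℝ)^2*Real.sqrt (q*r)^2) * (((max q r : ℕ) : ℝ)^2*Real.sqrt (p*s)^2) := by ring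
    _ ≤ _ := by rw [e1, e2, sq (A:ℝ)]; exact b4

lemma count_bound (N : ℕ) :
    ((((Finset.Icc 1 N ×ˢ Finset.Icc 1 N) ×ˢ (Finset.Icc 1 N ×ˢ Finset.Icc 1 N)).filter
      (fun t : (ℕ × ℕ) × (ℕ × ℕ) =>
        (t.1.1 / t.1.1.gcd t.1.2) * (t.1.2 / t.1.1.gcd t.1.2) =
        (t.2.1 / t.2.1.gcd t.2.2) * (t.2.2 / t.2.1.gcd t.2.2))).card : ℝ) ≤
      (4 * N * (1 + Real.log N)) ^ 2 := by
  classical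
  set I := Finset.Icc 1 N
  let T : Finset (Σ _ : (ℕ × ℕ) × (ℕ × ℕ), ℕ × ℕ) := ((I ×ˢ I) ×ˢ (I ×ˢ I)).sigma
    (fun t => Finset.Icc 1 (N / max (t.1.1 * t.2.1) (t.2.2 * t.1.2)) ×ˢ
              Finset.Icc 1 (N / max (t.1.1 * t.2.2) (t.2.1 * t.1.2)))
  let F : (Σ _ : (ℕ × ℕ) × (ℕ × ℕ), ℕ × ℕ) → (ℕ × ℕ) × (ℕ × ℕ) := fun z =>
    ((z.2.1 * (z.1.1.1 * z.1.2.1), z.2.1 * (z.1.2.2 * z.1.1.2)),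
     (z.2.2 * (z.1.1.1 * z.1.2.2), z.2.2 * (z.1.2.1 * z.1.1.2)))
  have hsub : (((I ×ˢ I) ×ˢ (I ×ˢ I)).filter
      (fun t : (ℕ × ℕ) × (ℕ × ℕ) =>
        (t.1.1 / t.1.1.gcd t.1.2) * (t.1.2 / t.1.1.gcd t.1.2) =
        (t.2.1 / t.2.1.gcd t.2.2) * (t.2.2 / t.2.1.gcd t.2.2))) ⊆ T.image F := by
    rintro ⟨⟨a, b⟩, ⟨c, d⟩⟩ ht
    simp only [I, Finset.mem_filter, Finset.mem_product, Finset.mem_Icc] at ht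
    obtain ⟨⟨⟨⟨ha, ha'⟩, hb, hb'⟩, ⟨hc, hc'⟩, hd, hd'⟩, he⟩ := ht
    obtain ⟨p, q, r, s, h, k, hp, hq, hr, hs, hh, hk, rfl, rfl, rfl, rfl⟩ := four_param ha hb hc hd he
    rw [Finset.mem_image]
    refine ⟨⟨((p, s), (q, r)), (h, k)⟩, ?_, rfl⟩
    have l1 : p * q ≤ N := le_trans (Nat.le_mul_of_pos_left _ hh) ha'
    have l2 : r * s ≤ N := le_trans (Nat.le_mul_of_pos_left _ hh) hb'
    simp only [T, I, Finset.mem_sigma, Finset.mem_product, Finset.mem_Icc]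
    refine ⟨⟨⟨⟨hp, ?_⟩, hs, ?_⟩, ⟨hq, ?_⟩, hr, ?_⟩, ⟨hh, ?_⟩, hk, ?_⟩
    · exact le_trans (Nat.le_mul_of_pos_right _ hq) l1
    · exact le_trans (Nat.le_mul_of_pos_left _ hr) l2
    · exact le_trans (Nat.le_mul_of_pos_left _ hp) l1
    · exact le_trans (Nat.le_mul_of_pos_right _ hs) l2
    · rw [Nat.le_div_iff_mul_le (lt_max_of_lt_left (by positivity))]
      rcases max_choice (p*q) (r*s) with h | h <;> rw [h] <;> assumption
    · rw [Nat.le_div_iff_mul_le (lt_max_of_lt_left (by positivity))]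
      rcases max_choice (p*r) (q*s) with h | h <;> rw [h] <;> assumption
  have hcard : (T.card : ℝ) ≤ ∑ t ∈ (I ×ˢ I) ×ˢ (I ×ˢ I), (N:ℝ)^2 * (Kk t.1.1 t.1.2 * Kk t.2.1 t.2.2) := by
    simp only [T, Finset.card_sigma, Finset.card_product, Nat.card_Icc, Nat.add_sub_cancel]
    push_cast
    apply Finset.sum_le_sum
    rintro ⟨⟨p, s⟩, ⟨q, r⟩⟩ ht
    simp only [I, Finset.mem_product, Finset.mem_Icc] at ht
    have := Kk_prod_bound (p := p) (q := q) (r := r) (s := s) (by omega) (by omega) (by omega) (by omega)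
    calc _ ≤ ((N:ℝ) / (max (p*q) (r*s) : ℕ)) * ((N:ℝ) / (max (p*r) (q*s) : ℕ)) := by
          gcongr <;> exact Nat.cast_div_le
      _ = (N:ℝ)^2 * (1 / (((max (p*q) (r*s) : ℕ) : ℝ) * (max (p*r) (q*s) : ℕ))) := by
          rw [div_mul_div_comm]; ring
      _ ≤ _ := by gcongr
  have hsum : ∑ t ∈ (I ×ˢ I) ×ˢ (I ×ˢ I), (N:ℝ)^2 * (Kk t.1.1 t.1.2 * Kk t.2.1 t.2.2) =
      (N:ℝ)^2 * (∑ p ∈ I, ∑ s ∈ I, Kk p s)^2 := by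
    rw [← Finset.mul_sum, sq (∑ p ∈ I, ∑ s ∈ I, Kk p s), ← Finset.sum_product', Finset.sum_mul_sum,
      Finset.sum_product]
  have hc := (Finset.card_le_card hsub).trans Finset.card_image_le
  have hK := sum_Kk N
  have hK0 : 0 ≤ ∑ p ∈ I, ∑ s ∈ I, Kk p s :=
    Finset.sum_nonneg fun _ _ => Finset.sum_nonneg fun _ _ => Kk_nonneg _ _
  calc _ ≤ (T.card : ℝ) := by exact_mod_cast hc
    _ ≤ (N:ℝ)^2 * (∑ p ∈ I, ∑ s ∈ I, Kk p s)^2 := hsum ▸ hcard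
    _ ≤ (N:ℝ)^2 * (4 * (1 + Real.log N))^2 := by gcongr
    _ = _ := by ring

section prob
variable {Ω : Type*} [m0 : MeasurableSpace Ω] {μ : Measure Ω} [IsProbabilityMeasure μ]
  {f : Ω → ℕ → ℝ}

/-- bounded and measurable -/
def BM (m : MeasurableSpace Ω) (G : Ω → ℝ) : Prop := Measurable[m] G ∧ ∃ C, ∀ ω, |G ω| ≤ C

omit m0 in
lemma BM.mono {m m' : MeasurableSpace Ω} (h : m ≤ m') {G : Ω → ℝ} (hG : BM m G) : BM m' G :=
  ⟨hG.1.mono h le_rfl, hG.2⟩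

omit m0 in
lemma BM.const {m : MeasurableSpace Ω} (c : ℝ) : BM m (fun _ : Ω => c) :=
  ⟨measurable_const, |c|, fun _ => le_rfl⟩

omit m0 in
lemma BM.add {m : MeasurableSpace Ω} {G H : Ω → ℝ} (hG : BM m G) (hH : BM m H) :
    BM m (fun ω => G ω + H ω) := by
  obtain ⟨h1, C, hC⟩ := hG
  obtain ⟨h2, D, hD⟩ := hH
  exact ⟨h1.add h2, C + D, fun ω => (abs_add_le _ _).trans (add_le_add (hC ω) (hD ω))⟩

omit m0 in
lemma BM.mul {m : MeasurableSpace Ω} {G H : Ω → ℝ} (hG : BM m G) (hH : BM m H) :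
    BM m (fun ω => G ω * H ω) := by
  obtain ⟨h1, C, hC⟩ := hG
  obtain ⟨h2, D, hD⟩ := hH
  refine ⟨h1.mul h2, C * D, fun ω => ?_⟩
  rw [abs_mul]
  exact mul_le_mul (hC ω) (hD ω) (abs_nonneg _) ((abs_nonneg _).trans (hC ω))

omit m0 in
lemma BM.pow {m : MeasurableSpace Ω} {G : Ω → ℝ} (hG : BM m G) (n : ℕ) :
    BM m (fun ω => G ω ^ n) := by
  induction n with
  | zero => simpa using BM.const 1
  | succ n ih => simpa only [pow_succ] using ih.mul hG

omit m0 in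
lemma BM.sum {m : MeasurableSpace Ω} {ι : Type*} (s : Finset ι) {G : ι → Ω → ℝ}
    (hG : ∀ i ∈ s, BM m (G i)) : BM m (fun ω => ∑ i ∈ s, G i ω) := by
  classical
  induction s using Finset.induction_on with
  | empty => simpa using BM.const 0
  | insert a s ha ih =>
    simp only [Finset.sum_insert ha]
    exact (hG a (by simp)).add (ih fun i hi => hG i (by simp [hi]))

omit m0 in
lemma BM.prod {m : MeasurableSpace Ω} {ι : Type*} (s : Finset ι) {G : ι → Ω → ℝ}
    (hG : ∀ i ∈ s, BM m (G i)) : BM m (fun ω => ∏ i ∈ s, G i ω) := by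
  classical
  induction s using Finset.induction_on with
  | empty => simpa using BM.const 1
  | insert a s ha ih =>
    simp only [Finset.prod_insert ha]
    exact (hG a (by simp)).mul (ih fun i hi => hG i (by simp [hi]))

lemma BM.integrable {G : Ω → ℝ} (hG : BM m0 G) : Integrable G μ := by
  obtain ⟨h1, C, hC⟩ := hG
  exact Integrable.of_bound h1.aestronglyMeasurable C (ae_of_all _ hC)

/-- the prime filtration -/
def Gf (hf : IsRademacherRMF μ f) : Filtration ℕ m0 where
  seq k := ⨆ q ∈ {q : Nat.Primes | (q : ℕ) ≤ k},
    MeasurableSpace.comap (fun ω => f ω (q : ℕ)) inferInstance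
  mono' := by
    intro i j hij
    exact biSup_mono fun q (hq : (q:ℕ) ≤ i) => (hq.trans hij : (q:ℕ) ≤ j)
  le' := by
    intro i
    exact iSup₂_le fun q _ => (hf.meas q).comap_le

variable (hf : IsRademacherRMF μ f) (hpm : ∀ ω p, p.Prime → f ω p = 1 ∨ f ω p = -1)

include hpm

lemma bm_prime {p k : ℕ} (hp : p.Prime) (hk : p ≤ k) : BM (Gf hf k) (fun ω => f ω p) := by
  refine ⟨?_, 1, fun ω => ?_⟩
  · rw [measurable_iff_comap_le]
    exact le_iSup₂_of_le (f := fun (q : Nat.Primes) (_ : q ∈ {q : Nat.Primes | (q : ℕ) ≤ k}) =>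
      MeasurableSpace.comap (fun ω => f ω (q : ℕ)) inferInstance) ⟨p, hp⟩ hk le_rfl
  · rcases hpm ω p hp with h | h <;> simp [h]

lemma bm_f {n k : ℕ} (hk : n ≤ k) : BM (Gf hf k) (fun ω => f ω n) := by
  by_cases hn : Squarefree n
  · simp only [fun ω => hf.eq_prod_of_squarefree ω n hn]
    exact BM.prod _ fun q hq => bm_prime hf hpm (Nat.prime_of_mem_primeFactors hq)
      ((Nat.le_of_mem_primeFactors hq).trans hk)
  · simp only [fun ω => hf.eq_zero_of_not_squarefree ω n hn]
    exact BM.const 0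

omit hpm in
lemma BM.top {k : ℕ} {G : Ω → ℝ} (hG : BM (Gf hf k) G) : BM m0 G := hG.mono ((Gf hf).le k)

include hf in
lemma int_prime {p : ℕ} (hp : p.Prime) : ∫ ω, f ω p ∂μ = 0 := by
  have hA : MeasurableSet {ω | f ω p = 1} := (hf.meas p) (measurableSet_singleton 1)
  have : ∀ ω, f ω p = 2 * ({ω | f ω p = 1}.indicator (fun _ => (1:ℝ)) ω) - 1 := by
    intro ω
    rcases hpm ω p hp with h | h
    · rw [Set.indicator_of_mem (show ω ∈ {ω | f ω p = 1} from h), h]; norm_num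
    · rw [Set.indicator_of_notMem (show ω ∉ {ω | f ω p = 1} from fun h' : f ω p = 1 => by rw [h] at h'; norm_num at h'), h]
      norm_num
  rw [integral_congr_ae (ae_of_all _ this), integral_sub, integral_const_mul, integral_indicator_const _ hA]
  · simp [measureReal_def, hf.prob_one p hp]
  · exact ((integrable_const _).indicator hA).const_mul _
  · exact integrable_const _

lemma orth {p k : ℕ} (hp : p.Prime) (hk : k < p) {G : Ω → ℝ} (hG : BM (Gf hf k) G) :
    ∫ ω, G ω * f ω p ∂μ = 0 := by
  have hind : Indep (Gf hf k : MeasurableSpace Ω)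
      (⨆ q ∈ ({⟨p, hp⟩} : Set Nat.Primes),
        MeasurableSpace.comap (fun ω => f ω (q : ℕ)) inferInstance) μ := by
    refine indep_iSup_of_disjoint (m := fun q : Nat.Primes =>
      MeasurableSpace.comap (fun ω => f ω (q : ℕ)) inferInstance)
      (fun q => (hf.meas q).comap_le) hf.indep.iIndep ?_
    refine Set.disjoint_left.2 fun q hq hq' => ?_
    have e : q = ⟨p, hp⟩ := hq'
    subst e
    exact absurd (show p ≤ k from hq) (not_le.2 hk)
  have hI : IndepFun G (fun ω => f ω p) μ := by
    rw [IndepFun_iff_Indep]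
    refine indep_of_indep_of_le_left (indep_of_indep_of_le_right hind ?_) hG.1.comap_le
    exact le_biSup (fun q : Nat.Primes =>
      MeasurableSpace.comap (fun ω => f ω (q : ℕ)) inferInstance)
      (Set.mem_singleton (⟨p, hp⟩ : Nat.Primes))
  have := hI.integral_mul_eq_mul_integral (hG.top hf).1.aestronglyMeasurable
    (hf.meas p).aestronglyMeasurable
  rw [int_prime hf hpm hp, mul_zero] at this
  exact this

include hf in
lemma int_f {n : ℕ} (hn : n ≠ 1) : ∫ ω, f ω n ∂μ = 0 := by
  by_cases hs : Squarefree n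
  · obtain ⟨q, hq, hmax⟩ := Finset.exists_max_image n.primeFactors id
      (Nat.nonempty_primeFactors.2 (by have := hs.ne_zero; omega))
    have hqp := Nat.prime_of_mem_primeFactors hq
    have : ∀ ω, f ω n = (∏ p ∈ n.primeFactors.erase q, f ω p) * f ω q := fun ω => by
      rw [hf.eq_prod_of_squarefree ω n hs, Finset.prod_erase_mul _ _ hq]
    simp_rw [this]
    refine orth hf hpm hqp (k := q - 1) (by have := hqp.pos; omega) (BM.prod _ fun p hp => ?_)
    have h1 := Finset.mem_erase.1 hp
    refine bm_prime hf hpm (Nat.prime_of_mem_primeFactors h1.2) ?_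
    have := hmax p h1.2
    simp only [id] at this
    omega
  · simp [hf.eq_zero_of_not_squarefree _ n hs]

include hf

omit [IsProbabilityMeasure μ] in
lemma f_sq {ω : Ω} {n : ℕ} (hs : Squarefree n) : f ω n * f ω n = 1 := by
  rw [hf.eq_prod_of_squarefree ω n hs, ← Finset.prod_mul_distrib]
  apply Finset.prod_eq_one
  intro p hp
  rcases hpm ω p (Nat.prime_of_mem_primeFactors hp) with h | h <;> simp [h]

omit hpm [IsProbabilityMeasure μ] in
lemma f_mul {ω : Ω} {m n : ℕ} (h : m.Coprime n) : f ω (m * n) = f ω m * f ω n := by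
  by_cases hs : Squarefree (m * n)
  · have := (Nat.squarefree_mul h).1 hs
    rw [hf.eq_prod_of_squarefree ω _ hs, hf.eq_prod_of_squarefree ω _ this.1,
      hf.eq_prod_of_squarefree ω _ this.2, h.primeFactors_mul,
      Finset.prod_union h.disjoint_primeFactors]
  · rw [hf.eq_zero_of_not_squarefree ω _ hs]
    rw [Nat.squarefree_mul h, not_and_or] at hs
    rcases hs with hs | hs <;> simp [hf.eq_zero_of_not_squarefree ω _ hs]

omit [IsProbabilityMeasure μ] in
/-- `f(a) f(b) = f(ab/gcd²)` -/
lemma f_mul_f {ω : Ω} {a b : ℕ} (ha : Squarefree a) (hb : Squarefree b) :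
    f ω a * f ω b = f ω ((a / a.gcd b) * (b / a.gcd b)) ∧
      Squarefree ((a / a.gcd b) * (b / a.gcd b)) := by
  have hg : 0 < a.gcd b := Nat.gcd_pos_of_pos_left _ (Nat.pos_of_ne_zero ha.ne_zero)
  have hc := Nat.coprime_div_gcd_div_gcd hg
  have e1 := Nat.mul_div_cancel' (Nat.gcd_dvd_left a b)
  have e2 := Nat.mul_div_cancel' (Nat.gcd_dvd_right a b)
  have hgs : Squarefree (a.gcd b) := ha.squarefree_of_dvd (Nat.gcd_dvd_left a b)
  generalize a / a.gcd b = u at *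
  generalize b / a.gcd b = v at *
  generalize a.gcd b = g at *
  subst e1 e2
  have c1 := Nat.coprime_of_squarefree_mul ha
  have c2 := Nat.coprime_of_squarefree_mul hb
  refine ⟨?_, ?_⟩
  · rw [f_mul hf c1, f_mul hf c2, f_mul hf hc]
    have := f_sq hf hpm (ω := ω) hgs
    linear_combination (f ω u * f ω v) * this
  · rw [Nat.squarefree_mul hc]
    exact ⟨ha.squarefree_of_dvd (Dvd.intro_left _ rfl), hb.squarefree_of_dvd (Dvd.intro_left _ rfl)⟩

lemma quad_int (a b c d : ℕ) :
    ∫ ω, f ω a * f ω b * (f ω c * f ω d) ∂μ ≤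
      if (a / a.gcd b) * (b / a.gcd b) = (c / c.gcd d) * (d / c.gcd d) then 1 else 0 := by
  by_cases ha : Squarefree a
  swap
  · simp only [hf.eq_zero_of_not_squarefree _ a ha, zero_mul, integral_zero]; split_ifs <;> simp
  by_cases hb : Squarefree b
  swap
  · simp only [hf.eq_zero_of_not_squarefree _ b hb, zero_mul, mul_zero, integral_zero]
    split_ifs <;> simp
  by_cases hc : Squarefree c
  swap
  · simp only [hf.eq_zero_of_not_squarefree _ c hc, zero_mul, mul_zero, integral_zero]
    split_ifs <;> simp
  by_cases hd : Squarefree d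
  swap
  · simp only [hf.eq_zero_of_not_squarefree _ d hd, zero_mul, mul_zero, integral_zero]
    split_ifs <;> simp
  have s1 : Squarefree ((a / a.gcd b) * (b / a.gcd b)) := by
    obtain ⟨ω⟩ : Nonempty Ω := nonempty_of_isProbabilityMeasure μ
    exact (f_mul_f hf hpm (ω := ω) ha hb).2
  have s2 : Squarefree ((c / c.gcd d) * (d / c.gcd d)) := by
    obtain ⟨ω⟩ : Nonempty Ω := nonempty_of_isProbabilityMeasure μ
    exact (f_mul_f hf hpm (ω := ω) hc hd).2
  simp only [fun ω => (f_mul_f hf hpm (ω := ω) ha hb).1, fun ω => (f_mul_f hf hpm (ω := ω) hc hd).1]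
  generalize (a / a.gcd b) * (b / a.gcd b) = u at *
  generalize (c / c.gcd d) * (d / c.gcd d) = v at *
  split_ifs with h
  · subst h
    simp [f_sq hf hpm s1]
  · simp only [fun ω => (f_mul_f hf hpm (ω := ω) s1 s2).1]
    apply le_of_eq
    apply int_f hf hpm
    intro h1
    apply h
    have hm := mul_eq_one.1 h1
    have e1 := Nat.mul_div_cancel' (Nat.gcd_dvd_left u v)
    have e2 := Nat.mul_div_cancel' (Nat.gcd_dvd_right u v)
    rw [hm.1] at e1
    rw [hm.2] at e2
    omega

lemma fourth_M (N : ℕ) :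
    ∫ ω, (∑ m ∈ Finset.Icc 1 N, f ω m) ^ 4 ∂μ ≤ (4 * N * (1 + Real.log N)) ^ 2 := by
  refine le_trans ?_ (count_bound N)
  have : ∀ ω, (∑ m ∈ Finset.Icc 1 N, f ω m) ^ 4 =
      ∑ t ∈ (Finset.Icc 1 N ×ˢ Finset.Icc 1 N) ×ˢ (Finset.Icc 1 N ×ˢ Finset.Icc 1 N),
        f ω t.1.1 * f ω t.1.2 * (f ω t.2.1 * f ω t.2.2) := by
    intro ω
    rw [show (∑ m ∈ Finset.Icc 1 N, f ω m) ^ 4 = ((∑ m ∈ Finset.Icc 1 N, f ω m) *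
      (∑ m ∈ Finset.Icc 1 N, f ω m)) * ((∑ m ∈ Finset.Icc 1 N, f ω m) *
      (∑ m ∈ Finset.Icc 1 N, f ω m)) by ring]
    rw [Finset.sum_mul_sum, ← Finset.sum_product', Finset.sum_mul_sum, ← Finset.sum_product']
  simp_rw [this]
  have bf : ∀ n, BM m0 (fun ω => f ω n) := fun n => (bm_f hf hpm (le_refl n)).top hf
  rw [integral_finsetSum]
  · rw [← Finset.sum_boole]
    exact Finset.sum_le_sum fun t _ => quad_int hf hpm _ _ _ _
  · intro t _
    exact (((bf _).mul (bf _)).mul ((bf _).mul (bf _))).integrable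

omit hf hpm
/-- inner sum -/
def MM (f : Ω → ℕ → ℝ) (y p : ℕ) (ω : Ω) : ℝ := ∑ m ∈ Finset.Icc 1 (y / p), f ω m

/-- partial sum martingale -/
def SS (f : Ω → ℕ → ℝ) (y k : ℕ) (ω : Ω) : ℝ :=
  ∑ p ∈ (Finset.Ioc y.sqrt k).filter Nat.Prime, f ω p * MM f y p ω

omit m0 in
lemma SS_succ (y k : ℕ) (ω : Ω) : SS f y (k+1) ω = SS f y k ω +
    if y.sqrt < k + 1 ∧ (k+1).Prime then f ω (k+1) * MM f y (k+1) ω else 0 := by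
  unfold SS
  by_cases h : y.sqrt < k + 1
  · have : Finset.Ioc y.sqrt (k+1) = insert (k+1) (Finset.Ioc y.sqrt k) := by
      ext; simp; omega
    rw [this, Finset.filter_insert]
    by_cases hp : (k+1).Prime
    · rw [if_pos hp, if_pos ⟨h, hp⟩, Finset.sum_insert (by simp)]; ring
    · rw [if_neg hp, if_neg (by tauto)]; simp
  · rw [if_neg (by tauto), Finset.Ioc_eq_empty (by omega), Finset.Ioc_eq_empty (by omega)]; simp

include hf hpm
lemma bm_MM {y p k : ℕ} (h : y.sqrt < p) (hk : p ≤ k + 1) : BM (Gf hf k) (MM f y p) := by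
  refine BM.sum _ fun m hm => bm_f hf hpm ?_
  have : y / p < p := by
    rw [Nat.div_lt_iff_lt_mul (by omega)]; exact Nat.sqrt_lt.1 h
  have := (Finset.mem_Icc.1 hm).2
  omega

lemma bm_SS (y k : ℕ) : BM (Gf hf k) (SS f y k) := by
  refine BM.sum _ fun p hp => ?_
  simp only [Finset.mem_filter, Finset.mem_Ioc] at hp
  exact (bm_prime hf hpm hp.2 hp.1.2).mul (bm_MM hf hpm hp.1.1 (by omega))

lemma SS_submart (y : ℕ) : Submartingale (fun k ω => SS f y k ω ^ 4) (Gf hf) μ := by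
  have bS := fun k => (bm_SS hf hpm y k)
  refine submartingale_of_setIntegral_le_succ (fun k => ((bS k).pow 4).1.stronglyMeasurable)
    (fun k => (((bS k).pow 4).top hf).integrable) ?_
  intro k s hs
  by_cases h : y.sqrt < k + 1 ∧ (k+1).Prime
  swap
  · simp only [SS_succ, if_neg h, add_zero]; exact le_rfl
  have hs' := (Gf hf).le k s hs
  have b1 : BM (Gf hf k) (s.indicator (fun _ => (1:ℝ))) :=
    ⟨measurable_const.indicator hs, 1, fun ω => by
      by_cases hω : ω ∈ s <;> simp [hω]⟩
  have bM := bm_MM hf hpm h.1 (le_refl (k+1))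
  have bG := (b1.mul ((bS k).pow 3)).mul bM
  have h0 := orth hf hpm h.2 (Nat.lt_succ_self k) bG
  have bp := (bm_prime hf hpm h.2 (le_refl _)).top hf
  have hcv : ∀ ω, s.indicator (fun ω => SS f y k ω ^ 4) ω +
      4 * (s.indicator (fun _ => (1:ℝ)) ω * SS f y k ω ^ 3 * MM f y (k+1) ω * f ω (k+1)) ≤
      s.indicator (fun ω => SS f y (k+1) ω ^ 4) ω := by
    intro ω
    by_cases hω : ω ∈ s
    · simp only [hω, Set.indicator_of_mem, SS_succ y k ω, if_pos h]
      generalize SS f y k ω = a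
      generalize f ω (k+1) = e
      generalize MM f y (k+1) ω = M
      have : (a + e * M)^4 - (a^4 + 4 * (1 * a^3 * M * e)) =
        (e*M)^2 * (2*a^2 + (2 * a + e*M)^2) := by ring
      have : 0 ≤ (e*M)^2 * (2*a^2 + (2 * a + e*M)^2) := by positivity
      linarith
    · simp [hω]
  rw [← integral_indicator hs', ← integral_indicator hs']
  have hi1 : Integrable (s.indicator (fun ω => SS f y k ω ^ 4)) μ :=
    (((bS k).pow 4).top hf).integrable.indicator hs'
  have hi2 : Integrable (s.indicator (fun ω => SS f y (k+1) ω ^ 4)) μ :=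
    (((bS (k+1)).pow 4).top hf).integrable.indicator hs'
  have hi3 := (((bG.top hf).mul bp).integrable (μ := μ)).const_mul 4
  have := integral_mono (hi1.add hi3) hi2 hcv
  simp only [Pi.add_apply] at this
  rw [integral_add hi1 hi3, integral_const_mul, h0] at this
  linarith

lemma fourth_SS (y n : ℕ) {B : ℝ} (hB0 : 0 ≤ B)
    (hB : ∀ p, y.sqrt < p → ∫ ω, MM f y p ω ^ 4 ∂μ ≤ B ^ 2) :
    ∫ ω, SS f y (y.sqrt + n) ω ^ 4 ∂μ ≤ (3 * B * n) ^ 2 := by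
  induction n with
  | zero => simp [SS]
  | succ n ih =>
    rw [← add_assoc]
    set k := y.sqrt + n
    by_cases h : y.sqrt < k + 1 ∧ (k+1).Prime
    swap
    · simp only [SS_succ, if_neg h, add_zero]
      refine ih.trans ?_
      gcongr; simp
    have bS := bm_SS hf hpm y k
    have bM := bm_MM hf hpm h.1 (le_refl (k+1))
    have bp := (bm_prime hf hpm h.2 (le_refl _)).top hf
    have o1 := orth hf hpm h.2 (Nat.lt_succ_self k) ((bS.pow 3).mul bM)
    have o2 := orth hf hpm h.2 (Nat.lt_succ_self k) (bS.mul (bM.pow 3))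
    have i1 := ((((bS.pow 3).mul bM).top hf).mul bp).integrable (μ := μ)
    have i2 := (((bS.mul (bM.pow 3)).top hf).mul bp).integrable (μ := μ)
    have i3 := ((bS.pow 4).top hf).integrable (μ := μ)
    have i4 := ((bM.pow 4).top hf).integrable (μ := μ)
    have hBM := hB (k+1) h.1
    set c : ℝ := 3 * n with hc
    rcases Nat.eq_zero_or_pos n with hn | hn
    · have hz : ∀ ω, SS f y k ω = 0 := by intro ω; simp [SS, k, hn]
      have : ∀ ω, SS f y (k+1) ω ^ 4 = MM f y (k+1) ω ^ 4 := by
        intro ω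
        rw [SS_succ, if_pos h, hz]
        rcases hpm ω _ h.2 with h | h <;> rw [h] <;> ring
      simp_rw [this]
      refine hBM.trans ?_
      rw [hn]; push_cast; nlinarith [sq_nonneg B]
    · have hcp : 0 < c := by rw [hc]; positivity
      have hpt : ∀ ω, SS f y (k+1) ω ^ 4 ≤
          ((1 + 3 / c) * SS f y k ω ^ 4 + (1 + 3 * c) * MM f y (k+1) ω ^ 4) +
          (4 * (SS f y k ω ^ 3 * MM f y (k+1) ω * f ω (k+1)) +
           4 * (SS f y k ω * MM f y (k+1) ω ^ 3 * f ω (k+1))) := by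
        intro ω
        rw [SS_succ, if_pos h]
        have he : f ω (k+1) ^ 2 = 1 := by
          rcases hpm ω _ h.2 with h | h <;> rw [h] <;> norm_num
        generalize SS f y k ω = a
        generalize f ω (k+1) = e at he
        generalize MM f y (k+1) ω = M
        have he3 : e ^ 3 = e := by rw [pow_succ, he, one_mul]
        have he4 : e ^ 4 = 1 := by rw [pow_succ, he3, ← sq, he]
        have ex : (a + e * M)^4 = a^4 + 4 * (a^3*M*e) + 6 * (a^2*M^2) + 4 * (a*M^3*e) + M^4 := by
          linear_combination 6*a^2*M^2*he + 4*a*M^3*he3 + M^4*he4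
        have ag : 6 * (a^2*M^2) ≤ 3/c * a^4 + 3*c*M^4 := by
          have : 3/c * a^4 + 3*c*M^4 - 6 * (a^2*M^2) = 3/c * (a^2 - c*M^2)^2 := by
            field_simp; ring
          have : 0 ≤ 3/c * (a^2 - c*M^2)^2 := by positivity
          linarith
        rw [ex]; linarith
      have j1 : Integrable (fun ω => (1 + 3 / c) * SS f y k ω ^ 4 +
          (1 + 3 * c) * MM f y (k+1) ω ^ 4) μ := (i3.const_mul (1 + 3/c)).add (i4.const_mul (1+3*c))
      have j2 : Integrable (fun ω => 4 * (SS f y k ω ^ 3 * MM f y (k+1) ω * f ω (k+1)) +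
           4 * (SS f y k ω * MM f y (k+1) ω ^ 3 * f ω (k+1))) μ :=
        (i1.const_mul 4).add (i2.const_mul 4)
      have hint := integral_mono (((bm_SS hf hpm y (k+1)).pow 4).top hf).integrable
        (j1.add j2) hpt
      simp only [Pi.add_apply] at hint
      rw [integral_add j1 j2,
        integral_add (i3.const_mul (1 + 3/c)) (i4.const_mul (1+3*c)),
        integral_add (i1.const_mul 4) (i2.const_mul 4)] at hint
      simp only [integral_const_mul, o1, o2] at hint
      refine hint.trans ?_
      calc _ ≤ (1 + 3/c) * (3 * B * n)^2 + (1 + 3*c) * B^2 + (4 * 0 + 4 * 0) := by gcongr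
        _ = (c^2 + 6 * c + 1) * B^2 := by rw [hc]; field_simp; ring
        _ ≤ (3 * B * (n+1:ℕ))^2 := by
          have : (3 * B * (n+1:ℕ))^2 = (c+3)^2 * B^2 := by rw [hc]; push_cast; ring
          rw [this]; gcongr; nlinarith

lemma max_SS (y n : ℕ) {lam : ℝ} (hlam : 0 < lam) :
    μ {ω | ∃ k ≤ y.sqrt + n, lam ≤ |SS f y k ω|} ≤
      ENNReal.ofReal ((12 * (Real.sqrt y * (1 + Real.log y)) * n) ^ 2 / lam ^ 4) := by
  have hM : ∀ p, y.sqrt < p → ∫ ω, MM f y p ω ^ 4 ∂μ ≤ (4 * (Real.sqrt y * (1 + Real.log y))) ^ 2 := by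
    intro p hp
    refine (fourth_M hf hpm (y/p)).trans ?_
    have h1 : ((y / p : ℕ) : ℝ) ≤ Real.sqrt y := by
      apply Real.le_sqrt_of_sq_le
      have : (y / p) ^ 2 ≤ y := by
        have a1 : y / p < p := by
          rw [Nat.div_lt_iff_lt_mul (by omega)]; exact Nat.sqrt_lt.1 hp
        calc (y/p)^2 = (y/p) * (y/p) := sq _
          _ ≤ (y/p) * p := Nat.mul_le_mul_left _ a1.le
          _ ≤ y := Nat.div_mul_le_self _ _
      exact_mod_cast this
    have h2 : Real.log (y / p : ℕ) ≤ Real.log y := by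
      rcases Nat.eq_zero_or_pos (y/p) with h | h
      · rw [h]; simp only [Nat.cast_zero, Real.log_zero]; exact Real.log_natCast_nonneg y
      · apply Real.log_le_log (by exact_mod_cast h)
        exact_mod_cast Nat.div_le_self _ _
    have h3 := Real.log_natCast_nonneg (y/p)
    have h4 := Real.log_natCast_nonneg y
    rw [mul_assoc]
    gcongr
  have h4 := Real.log_natCast_nonneg y
  have hS := fourth_SS hf hpm y n (by positivity) hM
  have hd := maximal_ineq (SS_submart hf hpm y) (fun k ω => by positivity)
    (ε := Real.toNNReal (lam ^ 4)) (y.sqrt + n)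
  have hsub : {ω | ∃ k ≤ y.sqrt + n, lam ≤ |SS f y k ω|} ⊆ {ω | (Real.toNNReal (lam ^ 4) : ℝ) ≤
      (Finset.range (y.sqrt + n + 1)).sup' Finset.nonempty_range_add_one fun k => SS f y k ω ^ 4} := by
    rintro ω ⟨k, hk, hl⟩
    simp only [Set.mem_ofPred_eq, Finset.le_sup'_iff]
    refine ⟨k, by simp; omega, ?_⟩
    rw [Real.coe_toNNReal _ (by positivity)]
    rw [← Even.pow_abs (by decide : Even 4) (SS f y k ω)]
    gcongr
  refine (measure_mono hsub).trans ?_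
  rw [ENNReal.ofReal_div_of_pos (by positivity), ENNReal.le_div_iff_mul_le]
  · rw [mul_comm]
    refine hd.trans (ENNReal.ofReal_le_ofReal ?_)
    refine (setIntegral_le_integral (((bm_SS hf hpm y _).pow 4).top hf).integrable
      (ae_of_all _ fun ω => by positivity)).trans (hS.trans (le_of_eq (by ring)))
  · left; simp; positivity
  · left; simp

end prob

lemma Pfac_mem {n : ℕ} (hn : 1 < n) : Pfac n ∈ n.primeFactors := by
  unfold Pfac
  rw [if_neg (by omega)]
  obtain ⟨q, hq, h⟩ := Finset.exists_mem_eq_sup n.primeFactors (Nat.nonempty_primeFactors.2 hn) id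
  rw [h]; exact hq

lemma Pfac_mul {p m : ℕ} (hp : p.Prime) (hm : 0 < m) (hmp : m < p) : Pfac (p * m) = p := by
  have h1 : 1 < p * m := lt_of_lt_of_le hp.one_lt (Nat.le_mul_of_pos_right _ hm)
  unfold Pfac
  rw [if_neg (by omega)]
  apply le_antisymm
  · apply Finset.sup_le
    intro q hq
    have hqp := Nat.prime_of_mem_primeFactors hq
    rcases hqp.dvd_mul.1 (Nat.dvd_of_mem_primeFactors hq) with h | h
    · exact Nat.le_of_dvd hp.pos h
    · exact (Nat.le_of_dvd hm h).trans hmp.le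
  · exact Finset.le_sup (f := id) (Nat.mem_primeFactors.2 ⟨hp, Dvd.intro _ rfl, by omega⟩)

lemma sum_eq_SS {Ω : Type*} [MeasurableSpace Ω] {μ : Measure Ω} {f : Ω → ℕ → ℝ}
    (hf : IsRademacherRMF μ f) (y : ℕ) (x : ℝ) (hy : 0 < y) (ω : Ω) :
    ∑ n ∈ (Finset.Icc 1 y).filter (fun n : ℕ => Real.sqrt y < (Pfac n : ℝ) ∧
      (Pfac n : ℝ) ≤ Real.sqrt x), f ω n = SS f y ⌊Real.sqrt x⌋₊ ω := by
  have hlt : ∀ P : ℕ, Real.sqrt y < (P : ℝ) ↔ y.sqrt < P := by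
    intro P
    rcases Nat.eq_zero_or_pos P with h | h
    · subst h
      simp only [Nat.cast_zero, Nat.not_lt_zero, iff_false, not_lt]
      exact Real.sqrt_nonneg _
    · rw [Real.sqrt_lt' (by exact_mod_cast h), Nat.sqrt_lt']
      exact_mod_cast Iff.rfl
  have hle : ∀ P : ℕ, (P : ℝ) ≤ Real.sqrt x ↔ P ≤ ⌊Real.sqrt x⌋₊ := fun P =>
    (Nat.le_floor_iff (Real.sqrt_nonneg x)).symm
  have hs1 : 1 ≤ y.sqrt := Nat.sqrt_pos.2 hy
  unfold SS MM
  simp only [hlt, hle, Finset.mul_sum]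
  rw [Finset.sum_sigma']
  have hdiv : ∀ p, y.sqrt < p → y / p < p := fun p hp => by
    rw [Nat.div_lt_iff_lt_mul (by omega)]; exact Nat.sqrt_lt.1 hp
  refine Finset.sum_bij' (fun n _ => (⟨Pfac n, n / Pfac n⟩ : Σ _ : ℕ, ℕ)) (fun z _ => z.1 * z.2)
    ?_ ?_ ?_ ?_ ?_
  · intro n hn
    simp only [Finset.mem_filter, Finset.mem_Icc] at hn
    have h1 : 1 < n := by
      by_contra h
      have : Pfac n = 1 := by unfold Pfac; rw [if_pos (by omega)]
      omega
    have hm := Pfac_mem h1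
    have hpp := Nat.prime_of_mem_primeFactors hm
    simp only [Finset.mem_sigma, Finset.mem_filter, Finset.mem_Ioc, Finset.mem_Icc]
    refine ⟨⟨hn.2, hpp⟩, Nat.div_pos (Nat.le_of_mem_primeFactors hm) hpp.pos,
      Nat.div_le_div_right hn.1.2⟩
  · rintro ⟨p, m⟩ hz
    simp only [Finset.mem_sigma, Finset.mem_filter, Finset.mem_Ioc, Finset.mem_Icc] at hz ⊢
    have := hdiv p hz.1.1.1
    rw [Pfac_mul hz.1.2 (by omega) (by omega)]
    refine ⟨⟨Nat.mul_pos hz.1.2.pos hz.2.1, ?_⟩, hz.1.1⟩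
    exact (Nat.mul_le_mul_left p hz.2.2).trans (Nat.mul_div_le y p)
  · intro n hn
    simp only [Finset.mem_filter, Finset.mem_Icc] at hn
    have h1 : 1 < n := by
      by_contra h
      have : Pfac n = 1 := by unfold Pfac; rw [if_pos (by omega)]
      omega
    exact Nat.mul_div_cancel' (Nat.dvd_of_mem_primeFactors (Pfac_mem h1))
  · rintro ⟨p, m⟩ hz
    simp only [Finset.mem_sigma, Finset.mem_filter, Finset.mem_Ioc, Finset.mem_Icc] at hz
    have := hdiv p hz.1.1.1
    simp only [Pfac_mul hz.1.2 (show 0 < m by omega) (by omega)]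
    rw [Nat.mul_div_cancel_left _ hz.1.2.pos]
  · intro n hn
    simp only [Finset.mem_filter, Finset.mem_Icc] at hn
    have h1 : 1 < n := by
      by_contra h
      have : Pfac n = 1 := by unfold Pfac; rw [if_pos (by omega)]
      omega
    have hm := Pfac_mem h1
    have hpp := Nat.prime_of_mem_primeFactors hm
    have hd := hdiv _ hn.2.1
    have h2 : n / Pfac n ≤ y / Pfac n := Nat.div_le_div_right hn.1.2
    have h3 : 0 < n / Pfac n := Nat.div_pos (Nat.le_of_mem_primeFactors hm) hpp.pos
    rw [← f_mul hf, Nat.mul_div_cancel' (Nat.dvd_of_mem_primeFactors hm)]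
    rw [hpp.coprime_iff_not_dvd]
    intro hdvd
    have := Nat.le_of_dvd h3 hdvd
    omega

/-- the real-variable estimate -/
lemma real_est {t δ u y y' N t' : ℝ} (ht : 1 ≤ t) (hδ0 : 0 < δ) (hδ1 : δ ≤ 1)
    (hu : u = Real.exp (t/2)) (huδ : 1 ≤ u * δ) (htt : t' ≤ t + δ)
    (hy1 : y ≤ Real.exp t) (hy2 : Real.exp t - 1 ≤ y) (hy' : y' ≤ Real.exp t') (hyy : y ≤ y')
    (hN : N ≤ Real.sqrt y' - Real.sqrt y + 1) :
    (1 + Real.log y) * N / Real.sqrt y ≤ 16 * (t * δ) := by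
  have hu2 : Real.exp t = u ^ 2 := by rw [hu, sq, ← Real.exp_add]; ring_nf
  have he2 : 2 ≤ u ^ 2 := by rw [← hu2]; linarith [Real.add_one_le_exp t]
  have hu0 : 0 < u := by rw [hu]; exact Real.exp_pos _
  have hu1 : 1 ≤ u := by nlinarith
  rw [hu2] at hy1 hy2
  have hyh : u ^ 2 / 2 ≤ y := by linarith
  have hy0 : 0 < y := by nlinarith
  have hlog : Real.log y ≤ t := by
    rw [Real.log_le_iff_le_exp hy0, hu2]; exact hy1
  have hlog0 : 0 ≤ Real.log y := Real.log_nonneg (by linarith)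
  have hexp : Real.exp t' ≤ u ^ 2 * (1 + 2 * δ) := by
    calc Real.exp t' ≤ Real.exp (t + δ) := Real.exp_le_exp.2 htt
      _ = u^2 * Real.exp δ := by rw [Real.exp_add, hu2]
      _ ≤ _ := by
        have := Real.abs_exp_sub_one_le (x := δ) (by rw [abs_of_pos hδ0]; exact hδ1)
        rw [abs_of_pos hδ0] at this
        have := (abs_le.1 this).2
        gcongr; linarith
  set a := Real.sqrt y with ha
  set a' := Real.sqrt y' with ha'
  have haa : a ≤ a' := Real.sqrt_le_sqrt hyy
  have ha2 : a ^ 2 = y := Real.sq_sqrt hy0.le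
  have ha2' : a' ^ 2 = y' := Real.sq_sqrt (by linarith)
  have ha0 : 0 < a := Real.sqrt_pos.2 hy0
  have hau : u / 2 ≤ a := by
    apply Real.le_sqrt_of_sq_le; nlinarith
  -- N * a ≤ 8 δ y
  have h1 : N * a ≤ (y' - y) + a := by
    have : N * a ≤ (a' - a + 1) * a := mul_le_mul_of_nonneg_right hN ha0.le
    nlinarith
  have h2 : y' - y ≤ 2 * δ * u^2 + 1 := by linarith
  have h3 : (1:ℝ) ≤ δ * u^2 := by nlinarith
  have h4 : a ≤ 2 * δ * y := by
    rw [← ha2]; nlinarith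
  have h5 : N * a ≤ 8 * δ * y := by nlinarith
  have h6 : N / a ≤ 8 * δ := by
    rw [div_le_iff₀ ha0]
    have : N * a ≤ (8 * δ * a) * a := by rw [← ha2] at h5; linarith
    exact le_of_mul_le_mul_right this ha0
  calc _ = (1 + Real.log y) * (N / a) := by ring
    _ ≤ (1 + Real.log y) * (8 * δ) := by gcongr
    _ ≤ (2 * t) * (8 * δ) := by gcongr; linarith
    _ = _ := by ring

lemma asym (ε : ℝ) (hε : 0 < ε) (hε' : ε < 1 / 4) :
    ∃ j0 : ℕ, 1 ≤ j0 ∧ ∀ j : ℕ, j0 ≤ j → 0 < testPoint ε j ∧ testPoint ε j ≤ testPoint ε (j+1) ∧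
      1 ≤ Rbd ε (testPoint ε j) ∧
      (1 + Real.log (testPoint ε j)) *
        (((testPoint ε (j+1)).sqrt - (testPoint ε j).sqrt : ℕ) : ℝ) / Real.sqrt (testPoint ε j) ≤
        16 * (j:ℝ) ^ (2 * ε - 1) := by
  have T1 : Filter.Tendsto (fun j : ℕ => (j:ℝ) ^ ε) Filter.atTop Filter.atTop :=
    (tendsto_rpow_atTop hε).comp tendsto_natCast_atTop_atTop
  have E1 : ∀ᶠ x : ℝ in Filter.atTop, x ^ ((1 - ε) / ε) ≤ Real.exp ((1/2) * x) := by
    have := (isLittleO_rpow_exp_pos_mul_atTop ((1-ε)/ε) (show (0:ℝ) < 1/2 by norm_num)).bound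
      (show (0:ℝ) < 1 by norm_num)
    filter_upwards [this] with x hx
    rw [one_mul, Real.norm_of_nonneg (Real.exp_pos _).le] at hx
    exact (le_abs_self _).trans hx
  have E2 : ∀ᶠ j : ℕ in Filter.atTop, ((j:ℝ)^ε) ^ ((1 - ε) / ε) ≤ Real.exp ((1/2) * (j:ℝ)^ε) :=
    T1.eventually E1
  have E3 : ∀ᶠ j : ℕ in Filter.atTop, Real.exp (Real.exp 1) + 1 ≤ (j:ℝ)^ε :=
    T1.eventually (Filter.eventually_ge_atTop _)
  obtain ⟨j1, hj1⟩ := Filter.eventually_atTop.1 (E2.and E3)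
  refine ⟨max j1 1, le_max_right _ _, fun j hj => ?_⟩
  obtain ⟨h2, h3⟩ := hj1 j ((le_max_left _ _).trans hj)
  have hj1 : 1 ≤ j := (le_max_right _ _).trans hj
  have hjr : (1:ℝ) ≤ j := by exact_mod_cast hj1
  have hj0 : (0:ℝ) < j := by linarith
  set t : ℝ := (j:ℝ)^ε with ht
  have ht1 : 1 ≤ t := Real.one_le_rpow hjr hε.le
  have hy1 : (testPoint ε j : ℝ) ≤ Real.exp t := Nat.floor_le (Real.exp_pos _).le
  have hy2 : Real.exp t - 1 ≤ testPoint ε j := (Nat.sub_one_lt_floor _).le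
  have hy3 : Real.exp (Real.exp 1) ≤ testPoint ε j := by
    linarith [Real.add_one_le_exp t]
  have hypos : (0:ℝ) < testPoint ε j := lt_of_lt_of_le (Real.exp_pos _) hy3
  have hmono : (j:ℝ)^ε ≤ ((j+1:ℕ):ℝ)^ε := by
    apply Real.rpow_le_rpow hj0.le _ hε.le; push_cast; linarith
  have hyy : testPoint ε j ≤ testPoint ε (j+1) := Nat.floor_mono (Real.exp_le_exp.2 hmono)
  have hinc : ((j+1:ℕ):ℝ)^ε ≤ t + (j:ℝ)^(ε-1) := by
    have e1 : ((j+1:ℕ):ℝ) = j * (1 + 1/j) := by push_cast; field_simp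
    have hp : 0 ≤ 1/(j:ℝ) := by positivity
    have hb := rpow_one_add_le_one_add_mul_self (s := 1/(j:ℝ)) (by linarith) hε.le
      (by linarith : ε ≤ 1)
    rw [e1, Real.mul_rpow hj0.le (by positivity)]
    calc _ ≤ (j:ℝ)^ε * (1 + ε * (1/j)) := by gcongr
      _ ≤ (j:ℝ)^ε * (1 + 1 * (1/j)) := by gcongr; linarith
      _ = _ := by rw [Real.rpow_sub_one hj0.ne']; ring
  refine ⟨by exact_mod_cast hypos, hyy, ?_, ?_⟩
  · unfold Rbd
    apply Real.one_le_rpow _ (by linarith)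
    rw [Real.le_log_iff_exp_le, Real.le_log_iff_exp_le hypos]
    · exact hy3
    · exact lt_of_lt_of_le (Real.exp_pos 1) ((Real.le_log_iff_exp_le hypos).2 hy3)
  · have hδ0 : 0 < (j:ℝ)^(ε-1) := Real.rpow_pos_of_pos hj0 _
    have hδ1 : (j:ℝ)^(ε-1) ≤ 1 := Real.rpow_le_one_of_one_le_of_nonpos hjr (by linarith)
    have huδ : 1 ≤ Real.exp (t/2) * (j:ℝ)^(ε-1) := by
      have e : t ^ ((1-ε)/ε) = (j:ℝ)^(1-ε) := by
        rw [ht, ← Real.rpow_mul hj0.le]; congr 1; field_simp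
      rw [e] at h2
      calc (1:ℝ) = (j:ℝ)^(1-ε) * (j:ℝ)^(ε-1) := by
            rw [← Real.rpow_add hj0]; simp
        _ ≤ _ := by
          gcongr
          rw [show t / 2 = 1/2 * t by ring]; exact h2
    have hN : (((testPoint ε (j+1)).sqrt - (testPoint ε j).sqrt : ℕ) : ℝ) ≤
        Real.sqrt (testPoint ε (j+1)) - Real.sqrt (testPoint ε j) + 1 := by
      rw [Nat.cast_sub (Nat.sqrt_le_sqrt hyy)]
      have a1 := Real.nat_sqrt_le_real_sqrt (a := testPoint ε (j+1))
      have a2 := Real.real_sqrt_le_nat_sqrt_succ (a := testPoint ε j)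
      linarith
    have := real_est ht1 hδ0 hδ1 rfl huδ hinc hy1 hy2
      (Nat.floor_le (Real.exp_pos _).le : (testPoint ε (j+1) : ℝ) ≤ _) (by exact_mod_cast hyy) hN
    refine this.trans (le_of_eq ?_)
    rw [ht, ← Real.rpow_add hj0]; congr 2; ring

lemma tele {b : ℝ} (hb : 0 < b) (hb1 : b ≤ 1) {j : ℝ} (hj : 1 ≤ j) :
    b * (j+1) ^ (-b-1) ≤ j ^ (-b) - (j+1) ^ (-b) := by
  have hj1 : 0 < j + 1 := by linarith
  have hj0 : 0 < j := by linarith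
  have hb' := rpow_one_add_le_one_add_mul_self (s := -1/(j+1))
    (by rw [le_div_iff₀ hj1]; linarith) hb.le hb1
  have e1 : 1 + -1/(j+1) = j / (j+1) := by field_simp; ring
  rw [e1, Real.div_rpow hj0.le hj1.le] at hb'
  rw [Real.rpow_sub_one hj1.ne', Real.rpow_neg hj0.le, Real.rpow_neg hj1.le]
  set A := j ^ b
  set B := (j+1) ^ b
  have hA : 0 < A := Real.rpow_pos_of_pos hj0 _
  have hB : 0 < B := Real.rpow_pos_of_pos hj1 _
  set c := b / (j+1) with hc
  have hcp : 0 < c := by positivity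
  have h1 : A ≤ B * (1 - c) := by
    rw [div_le_iff₀ hB] at hb'
    have : 1 + b * (-1/(j+1)) = 1 - c := by rw [hc]; ring
    rw [this] at hb'; linarith
  have h2 : A * (1 + c) ≤ B := by nlinarith [mul_pos hB (mul_pos hcp hcp)]
  have : b * (B⁻¹ / (j+1)) = c * B⁻¹ := by rw [hc]; ring
  rw [this]
  have : (1 + c) * B⁻¹ ≤ A⁻¹ := by
    rw [← div_eq_mul_inv, div_le_iff₀ hB, inv_mul_eq_div, le_div_iff₀ hA]; linarith
  linarith

lemma tail_sum {b : ℝ} (hb : 0 < b) (hb1 : b ≤ 1) {m : ℕ} (hm : 1 ≤ m) (k : ℕ) :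
    ∑ i ∈ Finset.range k, ((m + 1 + i : ℕ) : ℝ) ^ (-b-1) ≤ (1/b) * (m:ℝ)^(-b) := by
  have : ∑ i ∈ Finset.range k, ((m + 1 + i : ℕ) : ℝ) ^ (-b-1) ≤
      (1/b) * ((m:ℝ)^(-b) - ((m + k : ℕ):ℝ)^(-b)) := by
    induction k with
    | zero => simp
    | succ k ih =>
      rw [Finset.sum_range_succ]
      have hmk : (1:ℝ) ≤ ((m + k : ℕ):ℝ) := by exact_mod_cast (by omega : 1 ≤ m + k)
      have h := tele hb hb1 hmk
      have e1 : ((m + 1 + k : ℕ) : ℝ) = ((m+k:ℕ):ℝ) + 1 := by push_cast; ring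
      have e2 : ((m + (k+1) : ℕ) : ℝ) = ((m+k:ℕ):ℝ) + 1 := by push_cast; ring
      rw [e1, e2]
      have h' : (((m+k:ℕ):ℝ) + 1) ^ (-b-1) ≤ (1/b) * (((m+k:ℕ):ℝ) ^ (-b) - (((m+k:ℕ):ℝ)+1) ^ (-b)) := by
        rw [one_div, inv_mul_eq_div, le_div_iff₀ hb]; linarith
      calc _ ≤ _ := add_le_add ih h'
        _ = _ := by ring
  refine this.trans ?_
  have : 0 ≤ ((m + k : ℕ):ℝ)^(-b) := by positivity
  gcongr; linarith

/-- the single-index event -/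
def Ev {Ω : Type*} (f : Ω → ℕ → ℝ) (ε : ℝ) (j : ℕ) : Set Ω :=
  {ω | ∃ x : ℝ, (testPoint ε j : ℝ) < x ∧ x ≤ (testPoint ε (j+1) : ℝ) ∧
              2 * (Real.sqrt (testPoint ε j) * Rbd ε (testPoint ε j)) <
                |∑ n ∈ (Finset.Icc 1 (testPoint ε j)).filter
                    (fun n : ℕ => Real.sqrt (testPoint ε j) < (Pfac n : ℝ) ∧
                      (Pfac n : ℝ) ≤ Real.sqrt x), f ω n|}

lemma Ev_bound {Ω : Type*} [MeasurableSpace Ω] {μ : Measure Ω} [IsProbabilityMeasure μ]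
    {f : Ω → ℕ → ℝ} (hf : IsRademacherRMF μ f)
    (hpm : ∀ ω p, p.Prime → f ω p = 1 ∨ f ω p = -1)
    {ε : ℝ} {j : ℕ} (hj : 0 < j) (h0 : 0 < testPoint ε j) (h1 : testPoint ε j ≤ testPoint ε (j+1))
    (hR : 1 ≤ Rbd ε (testPoint ε j))
    (hE : (1 + Real.log (testPoint ε j)) *
        (((testPoint ε (j+1)).sqrt - (testPoint ε j).sqrt : ℕ) : ℝ) / Real.sqrt (testPoint ε j) ≤
        16 * (j:ℝ) ^ (2 * ε - 1)) :
    μ (Ev f ε j) ≤ ENNReal.ofReal (192^2 * (j:ℝ) ^ (-(1 - 4*ε) - 1)) := by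
  set y := testPoint ε j
  set y' := testPoint ε (j+1)
  have hy0 : (0:ℝ) < y := by exact_mod_cast h0
  have hs0 : 0 < Real.sqrt y := Real.sqrt_pos.2 hy0
  have hsub : Ev f ε j ⊆ {ω | ∃ k ≤ y.sqrt + (y'.sqrt - y.sqrt), Real.sqrt y ≤ |SS f y k ω|} := by
    rintro ω ⟨x, hx1, hx2, hx⟩
    rw [sum_eq_SS hf _ _ h0] at hx
    refine ⟨⌊Real.sqrt x⌋₊, ?_, ?_⟩
    · rw [Nat.add_sub_cancel' (Nat.sqrt_le_sqrt h1)]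
      have : ⌊Real.sqrt y'⌋₊ = y'.sqrt := by simpa using Real.floor_real_sqrt_eq_nat_sqrt
      rw [← this]
      exact Nat.floor_mono (Real.sqrt_le_sqrt hx2)
    · refine le_trans ?_ hx.le
      nlinarith
  refine (measure_mono hsub).trans ((max_SS hf hpm y _ hs0).trans (ENNReal.ofReal_le_ofReal ?_))
  set n := y'.sqrt - y.sqrt
  have hlog := Real.log_natCast_nonneg y
  have hjr : (0:ℝ) < j := by exact_mod_cast hj
  calc _ = 12^2 * ((1 + Real.log y) * n / Real.sqrt y)^2 := by field_simp
    _ ≤ 12^2 * (16 * (j:ℝ)^(2*ε-1))^2 := by gcongr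
    _ = 192^2 * ((j:ℝ)^(2*ε-1))^2 := by ring
    _ = _ := by
      rw [← Real.rpow_natCast ((j:ℝ)^(2*ε-1)), ← Real.rpow_mul hjr.le]; congr 2; push_cast; ring

lemma main_pm {Ω : Type*} [MeasurableSpace Ω] (μ : Measure Ω) [IsProbabilityMeasure μ]
    (f : Ω → ℕ → ℝ) (hf : IsRademacherRMF μ f)
    (hpm : ∀ ω p, p.Prime → f ω p = 1 ∨ f ω p = -1)
    (ε : ℝ) (hε : 0 < ε) (hε' : ε < 1 / 4) :
    ∃ C : ℝ, 0 < C ∧ ∃ L : ℕ, ∀ ℓ : ℕ, L ≤ ℓ → 2 ≤ ℓ →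
      μ {ω | ∃ i : ℕ, 2 ≤ i ∧
            Xpt ε ((ℓ : ℝ) - 1) < (testPoint ε (i - 1) : ℝ) ∧
            (testPoint ε (i - 1) : ℝ) ≤ Xpt ε (ℓ : ℝ) ∧
            ∃ x : ℝ, (testPoint ε (i - 1) : ℝ) < x ∧ x ≤ (testPoint ε i : ℝ) ∧
              2 * (Real.sqrt (testPoint ε (i - 1)) * Rbd ε (testPoint ε (i - 1))) <
                |∑ n ∈ (Finset.Icc 1 (testPoint ε (i - 1))).filter
                    (fun n : ℕ => Real.sqrt (testPoint ε (i - 1)) < (Pfac n : ℝ) ∧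
                      (Pfac n : ℝ) ≤ Real.sqrt x), f ω n|} ≤
        ENNReal.ofReal (C *
          (2 : ℝ) ^ (-(((ℓ : ℝ) - 1) ^ (1 / (4 * ε)) * (1 - 4 * ε) / ε))) := by
  obtain ⟨j0, hj0, hjs⟩ := asym ε hε hε'
  set b : ℝ := 1 - 4 * ε with hb
  have hb0 : 0 < b := by rw [hb]; linarith
  have hb1 : b ≤ 1 := by rw [hb]; linarith
  have TJ : Filter.Tendsto (fun ℓ : ℕ => (2:ℝ) ^ (((ℓ : ℝ) - 1) ^ (1 / (4 * ε)) / ε))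
      Filter.atTop Filter.atTop := by
    have a1 : Filter.Tendsto (fun ℓ : ℕ => (ℓ:ℝ) - 1) Filter.atTop Filter.atTop :=
      Filter.tendsto_atTop_add_const_right _ (-1) tendsto_natCast_atTop_atTop
    have a2 := (tendsto_rpow_atTop (show 0 < 1 / (4 * ε) by positivity)).comp a1
    have a3 := a2.atTop_div_const hε
    exact (tendsto_rpow_atTop_of_base_gt_one 2 (by norm_num)).comp a3
  obtain ⟨L, hL⟩ := Filter.eventually_atTop.1 (TJ.eventually (Filter.eventually_ge_atTop (j0:ℝ)))
  refine ⟨192^2 * (1/b) * 2, by positivity, L, fun ℓ hℓ hℓ2 => ?_⟩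
  have hJ := hL ℓ hℓ
  set J : ℝ := (2:ℝ) ^ (((ℓ : ℝ) - 1) ^ (1 / (4 * ε)) / ε) with hJdef
  set m := ⌊J⌋₊ with hm
  have hmj : j0 ≤ m := Nat.le_floor hJ
  have hm1 : 1 ≤ m := hj0.trans hmj
  have hm1r : (1:ℝ) ≤ m := by exact_mod_cast hm1
  have hJ0 : 0 < J := by positivity
  have hJm : J / 2 ≤ m := by
    have := Nat.lt_floor_add_one J
    rw [← hm] at this; linarith
  have hl0 : (0:ℝ) ≤ (ℓ:ℝ) - 1 := by
    have : (2:ℝ) ≤ ℓ := by exact_mod_cast hℓ2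
    linarith
  calc _ ≤ μ (⋃ i : ℕ, Ev f ε (m + 1 + i)) := by
        apply measure_mono
        rintro ω ⟨i, hi, hX, -, x, hx⟩
        obtain ⟨j, rfl⟩ : ∃ j, i = j + 1 := ⟨i - 1, by omega⟩
        rw [Nat.add_sub_cancel] at *
        have hjJ : J < j := by
          have h1 : Xpt ε ((ℓ:ℝ) - 1) < Real.exp ((j:ℝ)^ε) :=
            lt_of_lt_of_le hX (Nat.floor_le (Real.exp_pos _).le)
          unfold Xpt at h1
          rw [Real.exp_lt_exp] at h1
          have h2 : J ^ ε < (j:ℝ)^ε := by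
            rw [hJdef, ← Real.rpow_mul (by norm_num), div_mul_cancel₀ _ hε.ne']; exact h1
          exact (Real.rpow_lt_rpow_iff hJ0.le (by positivity) hε).1 h2
        have hmj' : m < j := (Nat.floor_lt hJ0.le).2 hjJ
        rw [Set.mem_iUnion]
        refine ⟨j - (m+1), ?_⟩
        rw [show m + 1 + (j - (m+1)) = j by omega]
        exact ⟨x, hx⟩
    _ ≤ ∑' i : ℕ, μ (Ev f ε (m + 1 + i)) := measure_iUnion_le _
    _ ≤ ENNReal.ofReal (192^2 * ((1/b) * (m:ℝ)^(-b))) := by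
        apply ENNReal.tsum_le_of_sum_range_le
        intro k
        calc _ ≤ ∑ i ∈ Finset.range k, ENNReal.ofReal (192^2 * ((m + 1 + i : ℕ):ℝ) ^ (-b - 1)) := by
              apply Finset.sum_le_sum
              intro i _
              obtain ⟨g1, g2, g3, g4⟩ := hjs (m+1+i) (by omega)
              exact Ev_bound hf hpm (by omega) g1 g2 g3 g4
          _ = ENNReal.ofReal (∑ i ∈ Finset.range k, 192^2 * ((m + 1 + i : ℕ):ℝ) ^ (-b - 1)) :=
              (ENNReal.ofReal_sum_of_nonneg fun i _ => by positivity).symm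
          _ ≤ _ := by
              apply ENNReal.ofReal_le_ofReal
              rw [← Finset.mul_sum]
              gcongr
              exact tail_sum hb0 hb1 hm1 k
    _ ≤ _ := by
        apply ENNReal.ofReal_le_ofReal
        have e1 : (2 : ℝ) ^ (-(((ℓ : ℝ) - 1) ^ (1 / (4 * ε)) * b / ε)) = J ^ (-b) := by
          rw [hJdef, ← Real.rpow_mul (by norm_num)]; congr 1; ring
        rw [e1]
        have e2 : (m:ℝ)^(-b) ≤ 2 * J^(-b) := by
          calc (m:ℝ)^(-b) ≤ (J/2)^(-b) :=
                Real.rpow_le_rpow_of_nonpos (by positivity) hJm (by linarith)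
            _ = J^(-b) * 2^b := by
                rw [Real.div_rpow hJ0.le (by norm_num), Real.rpow_neg (by norm_num : (0:ℝ) ≤ 2)]
                field_simp
            _ ≤ J^(-b) * 2^(1:ℝ) := by
                gcongr; norm_num
            _ = _ := by rw [Real.rpow_one]; ring
        calc _ ≤ 192^2 * ((1/b) * (2 * J^(-b))) := by gcongr
          _ = _ := by ring

/-- sign-regularised version -/
def ff {Ω : Type*} (f : Ω → ℕ → ℝ) (ω : Ω) (n : ℕ) : ℝ :=
  open Classical in
  if Squarefree n then ∏ p ∈ n.primeFactors, (if f ω p = 1 then 1 else -1) else 0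

open Classical in
lemma ff_prime {Ω : Type*} (f : Ω → ℕ → ℝ) (ω : Ω) {p : ℕ} (hp : p.Prime) :
    ff f ω p = if f ω p = 1 then 1 else -1 := by
  unfold ff
  rw [if_pos hp.squarefree, hp.primeFactors, Finset.prod_singleton]

lemma ff_rmf {Ω : Type*} [MeasurableSpace Ω] {μ : Measure Ω} [IsProbabilityMeasure μ]
    {f : Ω → ℕ → ℝ} (hf : IsRademacherRMF μ f) : IsRademacherRMF μ (ff f) := by
  classical
  have hg : Measurable (fun v : ℝ => if v = 1 then (1:ℝ) else -1) :=
    Measurable.ite (measurableSet_singleton 1) measurable_const measurable_const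
  refine ⟨?_, ?_, ?_, ?_, ?_, ?_⟩
  · intro n
    unfold ff
    split_ifs
    · exact Finset.measurable_prod _ fun p _ => hg.comp (hf.meas p)
    · exact measurable_const
  · have := hf.indep.comp (fun _ => fun v : ℝ => if v = 1 then (1:ℝ) else -1) (fun _ => hg)
    convert this using 2 with p
    ext ω
    simp only [Function.comp]
    exact ff_prime f ω p.2
  · intro p hp
    rw [← hf.prob_one p hp]
    congr 1; ext ω
    simp only [Set.mem_ofPred_eq, ff_prime f ω hp]
    split_ifs with h <;> simp [h]; norm_num
  · intro p hp
    have : {ω | ff f ω p = -1} = {ω | f ω p = 1}ᶜ := by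
      ext ω
      simp only [Set.mem_ofPred_eq, Set.mem_compl_iff, ff_prime f ω hp]
      split_ifs with h <;> simp [h]; norm_num
    have hA : MeasurableSet {ω | f ω p = 1} := (hf.meas p) (measurableSet_singleton 1)
    rw [this, prob_compl_eq_one_sub hA, hf.prob_one p hp]
    simp
  · intro ω n hn
    unfold ff; rw [if_neg hn]
  · intro ω n hn
    rw [ff, if_pos hn]
    exact Finset.prod_congr rfl fun p hp =>
      (ff_prime f ω (Nat.prime_of_mem_primeFactors hp)).symm

lemma ff_ae {Ω : Type*} [MeasurableSpace Ω] {μ : Measure Ω} [IsProbabilityMeasure μ]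
    {f : Ω → ℕ → ℝ} (hf : IsRademacherRMF μ f) : ∀ᵐ ω ∂μ, ff f ω = f ω := by
  classical
  have h1 : ∀ p : Nat.Primes, ∀ᵐ ω ∂μ, f ω p = 1 ∨ f ω p = -1 := by
    intro p
    have m1 : MeasurableSet {ω | f ω p = 1} := (hf.meas p) (measurableSet_singleton 1)
    have m2 : MeasurableSet {ω | f ω p = -1} := (hf.meas p) (measurableSet_singleton (-1))
    have hu : μ ({ω | f ω p = 1} ∪ {ω | f ω p = -1}) = 1 := by
      rw [measure_union _ m2, hf.prob_one p p.2, hf.prob_neg_one p p.2]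
      · exact ENNReal.add_halves 1
      · refine Set.disjoint_left.2 fun ω (a : f ω p = 1) (b : f ω p = -1) => ?_
        rw [a] at b; norm_num at b
    exact (mem_ae_iff_prob_eq_one (m1.union m2)).2 hu
  filter_upwards [ae_all_iff.2 h1] with ω hω
  ext n
  by_cases hn : Squarefree n
  · rw [ff, if_pos hn, hf.eq_prod_of_squarefree ω n hn]
    refine Finset.prod_congr rfl fun p hp => ?_
    rcases hω ⟨p, Nat.prime_of_mem_primeFactors hp⟩ with h | h
    · simp only at h; simp [h]
    · simp only at h; rw [h]; norm_num
  · rw [ff, if_neg hn, hf.eq_zero_of_not_squarefree ω n hn]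

/-- For `0 < ε < 1/4` and sufficiently large `ℓ`,
`ℙ(𝓒_ℓ) ≪_ε 2^{-(ℓ-1)^K (1-4ε)/ε}`. -/
theorem event_C_rademacher
    {Ω : Type*} [MeasurableSpace Ω] (μ : Measure Ω) [IsProbabilityMeasure μ]
    (f : Ω → ℕ → ℝ) (hf : IsRademacherRMF μ f)
    (ε : ℝ) (hε : 0 < ε) (hε' : ε < 1 / 4) :
    ∃ C : ℝ, 0 < C ∧ ∃ L : ℕ, ∀ ℓ : ℕ, L ≤ ℓ → 2 ≤ ℓ →
      μ {ω | ∃ i : ℕ, 2 ≤ i ∧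
            Xpt ε ((ℓ : ℝ) - 1) < (testPoint ε (i - 1) : ℝ) ∧
            (testPoint ε (i - 1) : ℝ) ≤ Xpt ε (ℓ : ℝ) ∧
            ∃ x : ℝ, (testPoint ε (i - 1) : ℝ) < x ∧ x ≤ (testPoint ε i : ℝ) ∧
              2 * (Real.sqrt (testPoint ε (i - 1)) * Rbd ε (testPoint ε (i - 1))) <
                |∑ n ∈ (Finset.Icc 1 (testPoint ε (i - 1))).filter
                    (fun n : ℕ => Real.sqrt (testPoint ε (i - 1)) < (Pfac n : ℝ) ∧
                      (Pfac n : ℝ) ≤ Real.sqrt x), f ω n|} ≤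
        ENNReal.ofReal (C *
          (2 : ℝ) ^ (-(((ℓ : ℝ) - 1) ^ (1 / (4 * ε)) * (1 - 4 * ε) / ε))) := by

  obtain ⟨C, hC, L, h⟩ := main_pm μ (ff f) (ff_rmf hf) (fun ω p hp => by
    classical
    rw [ff_prime f ω hp]; split_ifs <;> simp) ε hε hε'
  refine ⟨C, hC, L, fun ℓ h1 h2 => ?_⟩
  refine le_trans (measure_mono_ae ?_) (h ℓ h1 h2)
  filter_upwards [ff_ae hf] with ω hω hmem
  obtain ⟨i, a, b, c, x, d, e, g⟩ := hmem
  exact ⟨i, a, b, c, x, d, e, by rw [hω]; exact g⟩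
end
end
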